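/- arXiv:math/0607638 — 3 statements merged into one kernel-verified Lean document; each statement's English description precedes it below -/
import Mathlib

section
/- Let k be an algebraically closed field of characteristic zero, and let t_1,…,t_r be nonnegative integers with t_1+⋯+t_r = m+1 and each t_i ≤ m+1. Set P = P(m;t_1,…,t_r). Then the length of the R_P-module (R/J_m)_P (i.e., the multiplicity of the m-th jet scheme of X along the component defined by P) equals (m+1)!/(t_1!⋯t_r!). -/
/-- The polynomial ring `R = k[x_i^(j) : 1 ≤ i ≤ n, 0 ≤ j ≤ m]` in `n(m+1)` variables;
the variable `x_i^(j)` is `MvPolynomial.X (i, j)`. -/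
abbrev JetRing (k : Type*) [Field k] (m n : ℕ) : Type _ :=
  MvPolynomial (Fin n × Fin (m + 1)) k

/-- `jetGen k m n r hrn j` is the generator `g_j`, i.e. the coefficient of `t^j` in the
product `∏_{i=1}^{r} (x_i^(0) + x_i^(1) t + ⋯ + x_i^(m) t^m)`. -/
noncomputable def jetGen (k : Type*) [Field k] (m n r : ℕ) (hrn : r ≤ n) (j : ℕ) :
    JetRing k m n :=
  Polynomial.coeff
    (∏ i : Fin r, ∑ l : Fin (m + 1),
      Polynomial.C (MvPolynomial.X (Fin.castLE hrn i, l)) * Polynomial.X ^ (l : ℕ)) j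

/-- The ideal `J_m = (g_0, …, g_m)` defining the `m`-th jet scheme of `x_1 ⋯ x_r = 0`. -/
noncomputable def jetIdeal (k : Type*) [Field k] (m n r : ℕ) (hrn : r ≤ n) :
    Ideal (JetRing k m n) :=
  Ideal.span (jetGen k m n r hrn '' Set.Iic m)

/-- The ideal `P(m; t_1, …, t_r) = (x_i^(j) : 1 ≤ i ≤ r, 0 ≤ j ≤ t_i - 1)`. -/
noncomputable def compPrime (k : Type*) [Field k] (m n r : ℕ) (hrn : r ≤ n)
    (t : Fin r → ℕ) : Ideal (JetRing k m n) :=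
  Ideal.span {p | ∃ (i : Fin r) (j : Fin (m + 1)), (j : ℕ) < t i ∧
    p = MvPolynomial.X (Fin.castLE hrn i, j)}

/-- The length of a module, valued in `ℕ∞`: the supremum of lengths of strictly
increasing chains of submodules. -/
noncomputable def moduleLength (R M : Type*) [Ring R] [AddCommGroup M] [Module R M] : ℕ∞ :=
  Order.height (⊤ : Submodule R M)

/-!
Put `N = m + 1 = ∑ t i`. The local ring `A` of the jet scheme at the generic point of the component
is an algebra over the function field `K` of the component, and its length is its dimension over
`K`, because `K` is also its residue field. It classifies arcs `a i` that agree with the generic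
arcs of the component in degrees `≥ t i` and satisfy `X ^ N ∣ ∏ a i`; the jet equations only involve
degrees `< N`, so the arcs may be taken monic. The coefficients of `a i` in degrees `< t i` are then
nilpotent and the one in degree `t i` is a unit, so by Hensel's lemma `a i` has a unique monic
divisor `f i` of degree `t i` reducing to `X ^ t i`, and `∏ f i = X ^ N`. Conversely, the `f i`
determine the `a i` by division with remainder. Hence `A` also classifies the factorizations
`X ^ N = ∏ f i` into monic polynomials of degrees `t i`. Splitting each `f i` completely is an
extension of rank `∏ (t i)!` and yields the universal complete splitting of `X ^ N`, of rank `N!`,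
so that `dim A * ∏ (t i)! = N!`.
-/

universe u

section UniversalSplitting

open Polynomial

variable {B A T : Type u} [CommRing B] [CommRing A] [CommRing T] [Algebra B A] [Algebra B T]

/-- `c` is the universal complete splitting of `p`: over the `B`-algebra `T`, the polynomial `p` is
`∏ j, (X - C (c j))`, and every such splitting over a ring under `B` comes from a unique
specialization of `T`. The test rings are restricted to the universe of `B`. -/
structure IsUniversalSplitting {κ : Type*} [Fintype κ] (p : B[X]) (c : κ → T) : Prop where
  map_eq_prod : p.map (algebraMap B T) = ∏ j, (X - C (c j))
  existsUnique_ringHom : ∀ {D : Type u} [CommRing D] (φ : B →+* D) (d : κ → D),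
    p.map φ = ∏ j, (X - C (d j)) →
      ∃! ψ : T →+* D, ψ.comp (algebraMap B T) = φ ∧ ∀ j, ψ (c j) = d j

/-- `f` is the universal factorization of `p` into monic polynomials of degrees `t i`: it is a
factorization over the `B`-algebra `A`, and every such factorization over a ring under `B` comes
from a unique specialization of `A`. The test rings are restricted to the universe of `B`. -/
structure IsUniversalFactorization {ι : Type*} [Fintype ι] {t : ι → ℕ} (p : B[X])
    (f : ∀ i, MonicDegreeEq A (t i)) : Prop where
  map_eq_prod : p.map (algebraMap B A) = ∏ i, (f i).1
  existsUnique_ringHom : ∀ {D : Type u} [CommRing D] (φ : B →+* D)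
    (g : ∀ i, MonicDegreeEq D (t i)), p.map φ = ∏ i, (g i).1 →
      ∃! ψ : A →+* D, ψ.comp (algebraMap B A) = φ ∧ ∀ i, (f i).map ψ = g i

namespace IsUniversalSplitting

variable {κ κ' : Type*} [Fintype κ] [Fintype κ'] {p : B[X]}

theorem map_comp_algebraMap {c : κ → T} (h : IsUniversalSplitting p c) {D : Type*} [CommRing D]
    (ψ : T →+* D) : p.map (ψ.comp (algebraMap B T)) = ∏ j, (X - C (ψ (c j))) := by
  simp [← Polynomial.map_map, h.map_eq_prod, Polynomial.map_prod]

theorem reindex {c : κ → T} (h : IsUniversalSplitting p c) (e : κ' ≃ κ) :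
    IsUniversalSplitting p (c ∘ e) where
  map_eq_prod := by
    rw [h.map_eq_prod]
    exact (e.prod_comp fun j => X - C (c j)).symm
  existsUnique_ringHom φ d hd := by
    simpa [e.forall_congr_left] using h.existsUnique_ringHom φ (d ∘ e.symm)
      (hd.trans (e.symm.prod_comp fun j => X - C (d j)).symm)

theorem nonempty_algEquiv {T' : Type u} [CommRing T'] [Algebra B T'] {c : κ → T} {c' : κ → T'}
    (h : IsUniversalSplitting p c) (h' : IsUniversalSplitting p c') : Nonempty (T ≃ₐ[B] T') := by
  obtain ⟨ψ, ⟨hψ, hψc⟩, -⟩ := h.existsUnique_ringHom _ c' h'.map_eq_prod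
  obtain ⟨ψ', ⟨hψ', hψc'⟩, -⟩ := h'.existsUnique_ringHom _ c h.map_eq_prod
  have hinv : ψ'.comp ψ = RingHom.id T :=
    (h.existsUnique_ringHom _ c h.map_eq_prod).unique
      ⟨by rw [RingHom.comp_assoc, hψ, hψ'], by simp [hψc, hψc']⟩ ⟨RingHom.id_comp _, by simp⟩
  have hinv' : ψ.comp ψ' = RingHom.id T' :=
    (h'.existsUnique_ringHom _ c' h'.map_eq_prod).unique
      ⟨by rw [RingHom.comp_assoc, hψ', hψ], by simp [hψc, hψc']⟩ ⟨RingHom.id_comp _, by simp⟩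
  exact ⟨AlgEquiv.ofRingEquiv (f := RingEquiv.ofRingHom ψ ψ' hinv' hinv) (RingHom.congr_fun hψ)⟩

theorem cons_root [Algebra (AdjoinRoot p) T] [IsScalarTower B (AdjoinRoot p) T] {n : ℕ}
    {q : (AdjoinRoot p)[X]} (hq : (X - C (AdjoinRoot.root p)) * q = p.map (AdjoinRoot.of p))
    {c : Fin n → T} (h : IsUniversalSplitting q c) :
    IsUniversalSplitting p
      (Fin.cons (algebraMap (AdjoinRoot p) T (AdjoinRoot.root p)) c : Fin (n + 1) → T) where
  map_eq_prod := by
    rw [IsScalarTower.algebraMap_eq B (AdjoinRoot p) T, ← Polynomial.map_map,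
      AdjoinRoot.algebraMap_eq, ← hq, Polynomial.map_mul, h.map_eq_prod, Fin.prod_univ_succ]
    simp
  existsUnique_ringHom φ d hd := by
    have hroot : p.eval₂ φ (d 0) = 0 := by
      rw [← eval_map, hd, Fin.prod_univ_succ]
      simp
    have hof : (AdjoinRoot.lift φ (d 0) hroot).comp (AdjoinRoot.of p) = φ := by ext; simp
    have hqd : q.map (AdjoinRoot.lift φ (d 0) hroot) = ∏ j : Fin n, (X - C (d j.succ)) := by
      apply (monic_X_sub_C (d 0)).isRegular.left
      have := congrArg (Polynomial.map (AdjoinRoot.lift φ (d 0) hroot)) hq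
      rw [Polynomial.map_map, hof, hd, Fin.prod_univ_succ] at this
      simpa using this
    refine (existsUnique_congr fun ψ => ?_).mpr (h.existsUnique_ringHom _ _ hqd)
    rw [IsScalarTower.algebraMap_eq B (AdjoinRoot p) T, Fin.forall_fin_succ, ← and_assoc]
    refine and_congr ⟨fun ⟨hψ, hψ0⟩ => AdjoinRoot.ringHom_ext ?_ ?_, fun hψ => ⟨?_, ?_⟩⟩ (by simp)
    · rw [hof, ← hψ, RingHom.comp_assoc, AdjoinRoot.algebraMap_eq]
    · simpa using hψ0
    · rw [← RingHom.comp_assoc, hψ, AdjoinRoot.algebraMap_eq, hof]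
    · simpa using RingHom.congr_fun hψ (AdjoinRoot.root p)

end IsUniversalSplitting

theorem exists_isUniversalSplitting (n : ℕ) : ∀ {B : Type u} [CommRing B] {p : B[X]},
    p.Monic → p.natDegree = n → ∃ (T : Type u) (_ : CommRing T) (_ : Algebra B T) (c : Fin n → T),
      Nonempty (Module.Basis (Fin n.factorial) B T) ∧ IsUniversalSplitting p c := by
  induction n with
  | zero =>
    intro B _ p hp hn
    obtain rfl : p = 1 := hp.natDegree_eq_zero.mp hn
    exact ⟨B, inferInstance, Algebra.id B, Fin.elim0, ⟨Module.Basis.singleton (Fin 1) B⟩,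
      by simp, by simp⟩
  | succ n ih =>
    intro B _ p hp hn
    have : Nontrivial B := by
      by_contra! h
      simp [natDegree_of_subsingleton] at hn
    let b : Module.Basis (Fin (n + 1)) B (AdjoinRoot p) :=
      (AdjoinRoot.powerBasisAux' hp).reindex (finCongr hn)
    have : Nontrivial (AdjoinRoot p) := b.repr.toEquiv.nontrivial
    have hq := mul_divByMonic_eq_iff_isRoot.mpr (AdjoinRoot.isRoot_root p)
    set q := p.map (AdjoinRoot.of p) /ₘ (X - C (AdjoinRoot.root p)) with hq_def
    have hqm : q.Monic := (monic_X_sub_C _).of_mul_monic_left (hq ▸ hp.map _)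
    have hqn : q.natDegree = n := by
      rw [hq_def, natDegree_divByMonic _ (monic_X_sub_C _), hp.natDegree_map, hn,
        natDegree_X_sub_C, Nat.add_sub_cancel]
    obtain ⟨T, _, _, c, ⟨bT⟩, hc⟩ := ih hqm hqn
    let _ : Algebra B T := ((algebraMap (AdjoinRoot p) T).comp (AdjoinRoot.of p)).toAlgebra
    have : IsScalarTower B (AdjoinRoot p) T := IsScalarTower.of_algebraMap_eq' rfl
    exact ⟨T, inferInstance, inferInstance, _, ⟨(b.smulTower bT).reindex finProdFinEquiv⟩,
      hc.cons_root hq⟩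

open scoped TensorProduct in
theorem existsUnique_ringHom_piTensorProduct {ι : Type*} [Finite ι] [DecidableEq ι]
    {R D : Type*} {S : ι → Type*} [CommRing R] [CommRing D] [∀ i, CommRing (S i)]
    [∀ i, Algebra R (S i)] {θ : R →+* D} (ψ : ∀ i, S i →+* D)
    (hψ : ∀ i, (ψ i).comp (algebraMap R (S i)) = θ) :
    ∃! Ψ : (⨂[R] i, S i) →+* D, Ψ.comp (algebraMap R (⨂[R] i, S i)) = θ ∧
      ∀ i x, Ψ (PiTensorProduct.singleAlgHom i x) = ψ i x := by
  have := Fintype.ofFinite ι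
  let _ : Algebra R D := θ.toAlgebra
  let ψ' (i) : S i →ₐ[R] D := ⟨ψ i, RingHom.congr_fun (hψ i)⟩
  let Ψ : (⨂[R] i, S i) →ₐ[R] D := PiTensorProduct.liftAlgHom
    (MultilinearMap.mkPiAlgebra R ι D |>.compLinearMap fun i => (ψ' i).toLinearMap)
    (by simp) (by simp [Finset.prod_mul_distrib])
  have hΨ (i) (x) : Ψ (PiTensorProduct.singleAlgHom i x) = ψ i x := by
    have hsingle (j) : ψ j (Pi.mulSingle i x j) = Pi.mulSingle (M := fun _ => D) i (ψ i x) j :=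
      Pi.apply_mulSingle (fun j => ψ j) (fun j => map_one _) i x j
    change Ψ (PiTensorProduct.tprod R (Pi.mulSingle i x)) = ψ i x
    simp [Ψ, ψ', PiTensorProduct.liftAlgHom, hsingle]
  refine ⟨Ψ, ⟨Ψ.comp_algebraMap, hΨ⟩, fun Ψ' ⟨hΨ', hx⟩ => ?_⟩
  have : (⟨Ψ', RingHom.congr_fun hΨ'⟩ : (⨂[R] i, S i) →ₐ[R] D) = Ψ :=
    PiTensorProduct.algHom_ext fun i => AlgHom.ext fun x => (hx i x).trans (hΨ i x).symm
  exact congrArg (fun F : (⨂[R] i, S i) →ₐ[R] D => (F : (⨂[R] i, S i) →+* D)) this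

theorem exists_monicDegreeEq_eq_prod {D : Type*} [CommRing D] {n : ℕ} (d : Fin n → D) :
    ∃ g : MonicDegreeEq D n, g.1 = ∏ j, (X - C (d j)) := by
  rcases subsingleton_or_nontrivial D with _ | _
  · exact ⟨⟨X ^ n, Subsingleton.elim _ _, fun _ _ => Subsingleton.elim _ _⟩, Subsingleton.elim _ _⟩
  · exact ⟨.mk _ (monic_prod_X_sub_C d Finset.univ) (by simp), rfl⟩

namespace IsUniversalFactorization

variable {ι : Type} [Fintype ι] {t : ι → ℕ} {p : B[X]} {f : ∀ i, MonicDegreeEq A (t i)}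

open scoped TensorProduct in
theorem isUniversalSplitting_piTensorProduct [DecidableEq ι] (hf : IsUniversalFactorization p f)
    {T : ι → Type u} [∀ i, CommRing (T i)] [∀ i, Algebra A (T i)] {c : ∀ i, Fin (t i) → T i}
    (hc : ∀ i, IsUniversalSplitting (f i).1 (c i))
    [∀ i, Algebra B (T i)] [∀ i, IsScalarTower B A (T i)] :
    IsUniversalSplitting p fun x : Σ i, Fin (t i) =>
      (PiTensorProduct.singleAlgHom x.1 (c x.1 x.2) : ⨂[A] i, T i) where
  map_eq_prod := by
    rw [IsScalarTower.algebraMap_eq B A, ← Polynomial.map_map, hf.map_eq_prod, Polynomial.map_prod,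
      Fintype.prod_sigma]
    refine Finset.prod_congr rfl fun i _ => ?_
    rw [← (PiTensorProduct.singleAlgHom i).comp_algebraMap]
    exact (hc i).map_comp_algebraMap _
  existsUnique_ringHom {D} _ φ d hd := by
    choose g hg using fun i => exists_monicDegreeEq_eq_prod fun j => d ⟨i, j⟩
    obtain ⟨θ, ⟨hθ, hfθ⟩, hθ_unique⟩ := hf.existsUnique_ringHom φ g
      (by simp only [hd, hg, Fintype.prod_sigma])
    choose ψ hψ hψ_unique using fun i => (hc i).existsUnique_ringHom θ (fun j => d ⟨i, j⟩)
      (by rw [← hg, ← hfθ]; rfl)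
    refine (existsUnique_congr fun Ψ => ?_).mpr
      (existsUnique_ringHom_piTensorProduct ψ fun i => (hψ i).1)
    rw [IsScalarTower.algebraMap_eq B A]
    constructor
    · rintro ⟨hΨ, hΨc⟩
      let Ψi (i) : T i →+* D := Ψ.comp (PiTensorProduct.singleAlgHom i : T i →ₐ[A] _).toRingHom
      have hΨi (i) : (Ψi i).comp (algebraMap A (T i)) = Ψ.comp (algebraMap A _) :=
        congrArg Ψ.comp (PiTensorProduct.singleAlgHom i).comp_algebraMap
      have hΨA : Ψ.comp (algebraMap A _) = θ := hθ_unique _ ⟨hΨ, fun i => Subtype.ext <| by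
        rw [MonicDegreeEq.map_coe, ← hΨi, (hc i).map_comp_algebraMap, hg]
        exact Finset.prod_congr rfl fun j _ => by rw [← hΨc ⟨i, j⟩]; rfl⟩
      exact ⟨hΨA, fun i => RingHom.congr_fun
        (hψ_unique i (Ψi i) ⟨(hΨi i).trans hΨA, fun j => hΨc ⟨i, j⟩⟩)⟩
    · rintro ⟨hΨ, hΨψ⟩
      exact ⟨by rw [← RingHom.comp_assoc, hΨ, hθ], fun x => by rw [hΨψ, (hψ x.1).2]⟩

open scoped TensorProduct in
theorem finrank_mul_prod_factorial [Module.Free B A] [Nontrivial A] (hp : p.Monic)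
    (hf : IsUniversalFactorization p f) :
    Module.finrank B A * ∏ i, (t i).factorial = p.natDegree.factorial := by
  classical
  have : Nontrivial B := (algebraMap B A).domain_nontrivial
  obtain ⟨T, _, _, c, ⟨bT⟩, hc⟩ := exists_isUniversalSplitting _ hp rfl
  choose S _ _ d bS hd using fun i =>
    exists_isUniversalSplitting (t i) (f i).monic (f i).natDegree
  let _ (i) : Algebra B (S i) := ((algebraMap A (S i)).comp (algebraMap B A)).toAlgebra
  have _ (i) : IsScalarTower B A (S i) := IsScalarTower.of_algebraMap_eq' rfl
  let b := Basis.piTensorProduct fun i => (bS i).some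
  have := Module.Free.of_basis b
  have hsum : ∑ i, t i = p.natDegree := by
    rw [← hp.natDegree_map (algebraMap B A), hf.map_eq_prod,
      natDegree_prod_of_monic _ _ fun i _ => (f i).monic]
    simp
  obtain ⟨e⟩ := ((hf.isUniversalSplitting_piTensorProduct hd).reindex
    (Fintype.equivFinOfCardEq (by simp [hsum])).symm).nonempty_algEquiv hc
  calc Module.finrank B A * ∏ i, (t i).factorial
      = Module.finrank B A * Module.finrank A (⨂[A] i, S i) := by
        simp [Module.finrank_eq_card_basis b]
    _ = Module.finrank B (⨂[A] i, S i) := Module.finrank_mul_finrank B A _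
    _ = Module.finrank B T := e.toLinearEquiv.finrank_eq
    _ = p.natDegree.factorial := by simp [Module.finrank_eq_card_basis bT]

theorem nontrivial [Nontrivial B] (hf : IsUniversalFactorization (X ^ ∑ i, t i : B[X]) f) :
    Nontrivial A := by
  obtain ⟨ψ, -⟩ := hf.existsUnique_ringHom (RingHom.id B)
    (fun i => .mk (X ^ t i) (monic_X_pow _) (natDegree_X_pow _)) (by
      simp [MonicDegreeEq.mk, Finset.prod_pow_eq_pow_sum])
  exact ψ.domain_nontrivial

end IsUniversalFactorization

end UniversalSplitting

section Weierstrass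

open Polynomial

variable {D : Type*} [CommRing D]

theorem isCoprime_X_pow_of_isUnit_coeff_zero {v : D[X]} (hv : IsUnit (v.coeff 0)) (n : ℕ) :
    IsCoprime (X ^ n) v := by
  refine IsCoprime.pow_left ?_
  obtain ⟨c, hc⟩ := hv.exists_left_inv
  refine ⟨-(C c * v.divX), C c, ?_⟩
  nth_rewrite 2 [← divX_mul_X_add v]
  rw [mul_add, ← C_mul, hc, C_1]
  ring

/- Hensel's lemma along a nilpotent ideal: the ring of universal coprime factorizations is étale. -/
theorem exists_dvd_map_eq_of_isCoprime {I : Ideal D} (hI : IsNilpotent I) {m n : ℕ}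
    (a : MonicDegreeEq D (m + n)) (g : MonicDegreeEq (D ⧸ I) m) (h : MonicDegreeEq (D ⧸ I) n)
    (hgh : IsCoprime g.1 h.1) (hfac : g.1 * h.1 = a.1.map (Ideal.Quotient.mk I)) :
    ∃ f : MonicDegreeEq D m, f.1 ∣ a.1 ∧ f.map (Ideal.Quotient.mk I) = g := by
  let E (S : Type _) [CommRing S] [Algebra D S] :=
    UniversalCoprimeFactorizationRing.homEquiv S m n rfl a
  obtain ⟨F, hF⟩ := Algebra.FormallySmooth.exists_lift I hI
    ((E (D ⧸ I)).symm ⟨(g, h), hfac, hgh⟩)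
  refine ⟨(E D F).1.1, ⟨(E D F).1.2.1, ?_⟩, ?_⟩
  · simpa using (E D F).2.1.symm
  · calc (E D F).1.1.map (Ideal.Quotient.mk I)
        = (E (D ⧸ I) ((Ideal.Quotient.mkₐ D I).comp F)).1.1 :=
          (UniversalCoprimeFactorizationRing.homEquiv_comp_fst D m n rfl a F
            (Ideal.Quotient.mkₐ D I)).symm
      _ = g := by rw [hF, Equiv.apply_symm_apply]

theorem exists_monicDegreeEq_dvd_of_isNilpotent {a : D[X]} (ha : a.Monic) {t : ℕ}
    (hunit : IsUnit (a.coeff t)) (hnil : ∀ j < t, IsNilpotent (a.coeff j)) :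
    ∃ f : MonicDegreeEq D t, f.1 ∣ a ∧ ∀ j < t, IsNilpotent (f.1.coeff j) := by
  rcases subsingleton_or_nontrivial D with _ | _
  · exact ⟨⟨X ^ t, Subsingleton.elim _ _, fun _ _ => Subsingleton.elim _ _⟩,
      (Subsingleton.elim _ _).dvd, fun j _ => ⟨1, Subsingleton.elim _ _⟩⟩
  obtain ⟨n, hn⟩ := Nat.exists_eq_add_of_le (le_natDegree_of_ne_zero hunit.ne_zero)
  let I : Ideal D := Ideal.span (a.coeff '' Set.Iio t)
  have hI_nil : I ≤ nilradical D := Ideal.span_le.mpr (Set.image_subset_iff.mpr hnil)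
  have hI : IsNilpotent I := (Ideal.FG.isNilpotent_iff_le_nilradical
    (Submodule.fg_span ((Set.finite_Iio t).image _))).mpr hI_nil
  obtain ⟨v, hv⟩ : X ^ t ∣ a.map (Ideal.Quotient.mk I) := X_pow_dvd_iff.mpr fun j hj => by
    rw [coeff_map, Ideal.Quotient.eq_zero_iff_mem]
    exact Ideal.subset_span ⟨j, hj, rfl⟩
  have hv_coeff (j : ℕ) : v.coeff j = Ideal.Quotient.mk I (a.coeff (t + j)) := by
    rw [← coeff_map, hv, add_comm, coeff_X_pow_mul]
  have ha' : a.coeff (t + n) = 1 := by rw [← hn]; exact ha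
  obtain ⟨f, hfa, hf⟩ := exists_dvd_map_eq_of_isCoprime hI (.mk a ha hn)
    ⟨X ^ t, by simp, fun j hj => by simp [coeff_X_pow, hj.ne']⟩
    ⟨v, by simp [hv_coeff, ha'], fun j hj => by
      rw [hv_coeff, coeff_eq_zero_of_natDegree_lt (by omega), map_zero]⟩
    (isCoprime_X_pow_of_isUnit_coeff_zero (by simpa [hv_coeff] using hunit.map _) t) hv.symm
  refine ⟨f, hfa, fun j hj => ?_⟩
  have hfj := congrArg (fun q => q.1.coeff j) hf
  simp only [MonicDegreeEq.map_coe, coeff_map, coeff_X_pow, hj.ne, if_false] at hfj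
  exact hI_nil (Ideal.Quotient.eq_zero_iff_mem.mp hfj)

theorem natTrailingDegree_prod {ι R : Type*} [CommRing R] [IsDomain R] (s : Finset ι)
    (p : ι → R[X]) (hp : ∀ i ∈ s, p i ≠ 0) :
    (∏ i ∈ s, p i).natTrailingDegree = ∑ i ∈ s, (p i).natTrailingDegree := by
  classical
  induction s using Finset.induction_on with
  | empty => simp
  | insert a s ha ih =>
    rw [Finset.forall_mem_insert] at hp
    rw [Finset.prod_insert ha, Finset.sum_insert ha, ← ih hp.2,
      natTrailingDegree_mul hp.1 (Finset.prod_ne_zero_iff.mpr hp.2)]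

variable {ι : Type*} [Fintype ι] {t : ι → ℕ}

theorem isNilpotent_coeff_of_X_pow_dvd_prod {p : ι → D[X]}
    (hunit : ∀ i, IsUnit ((p i).coeff (t i))) (hdvd : X ^ (∑ i, t i) ∣ ∏ i, p i) (i : ι) {j : ℕ}
    (hj : j < t i) : IsNilpotent ((p i).coeff j) := by
  rw [nilpotent_iff_mem_prime]
  intro q _
  let p' (i) := (p i).map (Ideal.Quotient.mk q)
  have hcoeff (i) : (p' i).coeff (t i) ≠ 0 := by
    simpa only [p', coeff_map] using ((hunit i).map (Ideal.Quotient.mk q)).ne_zero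
  have hne (i) : p' i ≠ 0 := fun h => hcoeff i (by simp [h])
  have hle (i) : (p' i).natTrailingDegree ≤ t i := natTrailingDegree_le_of_ne_zero (hcoeff i)
  have hsum : ∑ i, t i ≤ ∑ i, (p' i).natTrailingDegree := by
    rw [← natTrailingDegree_prod _ _ fun i _ => hne i]
    refine le_natTrailingDegree (Finset.prod_ne_zero_iff.mpr fun i _ => hne i) (X_pow_dvd_iff.mp ?_)
    simpa [p', Polynomial.map_prod] using Polynomial.map_dvd (Ideal.Quotient.mk q) hdvd
  have heq := (Finset.sum_eq_sum_iff_of_le fun i _ => hle i).mp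
    ((Finset.sum_le_sum fun i _ => hle i).antisymm hsum) i (Finset.mem_univ i)
  rw [← Ideal.Quotient.eq_zero_iff_mem, ← coeff_map]
  exact coeff_eq_zero_of_lt_natTrailingDegree (hj.trans_eq heq.symm)

theorem isUnit_coeff_zero_of_isUnit_coeff_mul {f v : D[X]} {t : ℕ}
    (hf : ∀ j < t, IsNilpotent (f.coeff j)) (hfv : IsUnit ((f * v).coeff t)) :
    IsUnit (v.coeff 0) := by
  have hnil : IsNilpotent (-∑ j ∈ Finset.range t, f.coeff j * v.coeff (t - j)) :=
    (isNilpotent_sum fun j hj =>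
      (Commute.all _ _).isNilpotent_mul_right (hf j (Finset.mem_range.mp hj))).neg
  have htop : f.coeff t * v.coeff 0 =
      (f * v).coeff t + -∑ j ∈ Finset.range t, f.coeff j * v.coeff (t - j) := by
    rw [coeff_mul, Finset.Nat.sum_antidiagonal_eq_sum_range_succ_mk, Finset.sum_range_succ]
    simp
  exact isUnit_of_mul_isUnit_right
    (htop ▸ hnil.isUnit_add_left_of_commute hfv (Commute.all _ _))

/-- The arcs `a i` agree with the arcs `W i` in degrees `≥ t i`, and their product vanishes to order
`∑ i, t i`. An arc is encoded as a polynomial, monic in all uses: the jet equations do not see the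
terms of degree `≥ ∑ i, t i`. -/
structure IsArcFamily (t : ι → ℕ) (W a : ι → D[X]) : Prop where
  degree_sub_lt : ∀ i, (a i - W i).degree < t i
  X_pow_dvd_prod : X ^ (∑ i, t i) ∣ ∏ i, a i

namespace IsArcFamily

variable {W a : ι → D[X]}

theorem map {D' : Type*} [CommRing D'] (h : IsArcFamily t W a) (ψ : D →+* D') :
    IsArcFamily t (fun i => (W i).map ψ) (fun i => (a i).map ψ) where
  degree_sub_lt i := by
    rw [← Polynomial.map_sub]
    exact degree_map_le.trans_lt (h.degree_sub_lt i)
  X_pow_dvd_prod := by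
    simpa [Polynomial.map_prod] using Polynomial.map_dvd ψ h.X_pow_dvd_prod

theorem isUnit_coeff (h : IsArcFamily t W a) (hunit : ∀ i, IsUnit ((W i).coeff (t i))) (i : ι) :
    IsUnit ((a i).coeff (t i)) := by
  have := coeff_eq_zero_of_degree_lt (h.degree_sub_lt i)
  rw [coeff_sub, sub_eq_zero] at this
  exact this ▸ hunit i

theorem monic (h : IsArcFamily t W a) (hW : ∀ i, (W i).Monic)
    (hunit : ∀ i, IsUnit ((W i).coeff (t i))) (i : ι) : (a i).Monic := by
  nontriviality D
  rw [← add_sub_cancel (W i) (a i)]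
  exact (hW i).add_of_left ((h.degree_sub_lt i).trans_le (le_degree_of_ne_zero (hunit i).ne_zero))

end IsArcFamily

theorem IsArcFamily.existsUnique_factorization {W a : ι → D[X]} (h : IsArcFamily t W a)
    (hW : ∀ i, (W i).Monic) (hunit : ∀ i, IsUnit ((W i).coeff (t i))) :
    ∃! f : ∀ i, MonicDegreeEq D (t i), ∏ i, (f i).1 = X ^ ∑ i, t i ∧ ∀ i, (f i).1 ∣ a i := by
  have hunit_a := h.isUnit_coeff hunit
  choose f hfa hfnil using fun i => exists_monicDegreeEq_dvd_of_isNilpotent (h.monic hW hunit i)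
    (hunit_a i) (fun _ => isNilpotent_coeff_of_X_pow_dvd_prod hunit_a h.X_pow_dvd_prod i)
  choose v hv using hfa
  have hv_unit (i) : IsUnit ((v i).coeff 0) :=
    isUnit_coeff_zero_of_isUnit_coeff_mul (hfnil i) (hv i ▸ hunit_a i)
  have hprod : ∏ i, (f i).1 = X ^ ∑ i, t i := by
    have hcop : IsCoprime (X ^ ∑ i, t i) (∏ i, v i) :=
      IsCoprime.prod_right fun i _ => isCoprime_X_pow_of_isUnit_coeff_zero (hv_unit i) _
    have hdvd := h.X_pow_dvd_prod
    simp only [hv, Finset.prod_mul_distrib] at hdvd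
    nontriviality D
    refine eq_of_monic_of_dvd_of_natDegree_le (monic_X_pow _)
      (monic_prod_of_monic _ _ fun i _ => (f i).monic) (hcop.dvd_of_dvd_mul_right hdvd) ?_
    simp [natDegree_prod_of_monic _ _ fun i _ => (f i).monic]
  refine ⟨f, ⟨hprod, fun i => ⟨v i, hv i⟩⟩, fun g ⟨hg, hga⟩ => funext fun i => Subtype.ext ?_⟩
  have hcop : IsCoprime (g i).1 (v i) :=
    (isCoprime_X_pow_of_isUnit_coeff_zero (hv_unit i) (∑ i, t i)).of_isCoprime_of_dvd_left
      (hg ▸ Finset.dvd_prod_of_mem _ (Finset.mem_univ i))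
  nontriviality D
  exact (eq_of_monic_of_dvd_of_natDegree_le (g i).monic (f i).monic
    (hcop.dvd_of_dvd_mul_right (hv i ▸ hga i)) (by simp)).symm

theorem existsUnique_isArcFamily {f : ∀ i, MonicDegreeEq D (t i)}
    (hf : ∏ i, (f i).1 = X ^ ∑ i, t i) (W : ι → D[X]) :
    ∃! a, IsArcFamily t W a ∧ ∀ i, (f i).1 ∣ a i := by
  rcases subsingleton_or_nontrivial D with _ | _
  · exact ⟨W, ⟨⟨fun i => by simp [Subsingleton.elim (W i) 0], (Subsingleton.elim _ _).dvd⟩,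
      fun i => (Subsingleton.elim _ _).dvd⟩, fun _ _ => Subsingleton.elim _ _⟩
  have hdvd (i) : (f i).1 ∣ W i - W i %ₘ (f i).1 :=
    ⟨W i /ₘ (f i).1, by rw [sub_eq_iff_eq_add', modByMonic_add_div]⟩
  refine ⟨fun i => W i - W i %ₘ (f i).1, ⟨⟨fun i => ?_, ?_⟩, hdvd⟩, fun a ⟨ha, hfa⟩ => ?_⟩
  · rw [sub_sub_cancel_left, degree_neg, ← (f i).degree]
    exact degree_modByMonic_lt _ (f i).monic
  · exact hf ▸ Finset.prod_dvd_prod_of_dvd _ _ fun i _ => hdvd i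
  · funext i
    obtain ⟨q, hq⟩ := hfa i
    have hrem := (div_modByMonic_unique q (W i - a i) (f i).monic
      ⟨by rw [← hq, sub_add_cancel], by
        rw [(f i).degree, ← degree_neg, neg_sub]; exact ha.degree_sub_lt i⟩).2
    rw [hrem, sub_sub_cancel]

/-- The arcs `a`, over the `K`-algebra `A`, are universal among the arcs agreeing with `W` in
degrees `≥ t i` whose product vanishes to order `∑ i, t i`. -/
structure IsUniversalArcFamily {K A : Type u} [CommRing K] [CommRing A] [Algebra K A] (t : ι → ℕ)
    (W : ι → K[X]) (a : ι → A[X]) : Prop where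
  isArcFamily : IsArcFamily t (fun i => (W i).map (algebraMap K A)) a
  existsUnique_ringHom : ∀ {D : Type u} [CommRing D] (φ : K →+* D) (b : ι → D[X]),
    IsArcFamily t (fun i => (W i).map φ) b →
      ∃! ψ : A →+* D, ψ.comp (algebraMap K A) = φ ∧ ∀ i, (a i).map ψ = b i

theorem IsUniversalArcFamily.exists_isUniversalFactorization {K A : Type u} [CommRing K]
    [CommRing A] [Algebra K A] {W : ι → K[X]} {a : ι → A[X]} (h : IsUniversalArcFamily t W a)
    (hW : ∀ i, (W i).Monic) (hunit : ∀ i, IsUnit ((W i).coeff (t i))) :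
    ∃ f : ∀ i, MonicDegreeEq A (t i), IsUniversalFactorization (X ^ ∑ i, t i : K[X]) f := by
  have hW_map {D : Type u} [CommRing D] (φ : K →+* D) (i) : ((W i).map φ).Monic := (hW i).map φ
  have hunit_map {D : Type u} [CommRing D] (φ : K →+* D) (i) :
      IsUnit (((W i).map φ).coeff (t i)) := by
    rw [coeff_map]; exact (hunit i).map φ
  obtain ⟨f, ⟨hf, hfa⟩, -⟩ := h.isArcFamily.existsUnique_factorization (hW_map _) (hunit_map _)
  refine ⟨f, by simp [hf], fun {D} _ φ g hg => ?_⟩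
  replace hg : ∏ i, (g i).1 = X ^ ∑ i, t i := by rw [← hg]; simp
  obtain ⟨b, ⟨hb, hgb⟩, hb_unique⟩ := existsUnique_isArcFamily hg fun i => (W i).map φ
  have hfactor := hb.existsUnique_factorization (hW_map φ) (hunit_map φ)
  have hmap_iff (ψ : A →+* D) (hψ : ψ.comp (algebraMap K A) = φ) :
      (∀ i, (f i).map ψ = g i) ↔ ∀ i, (a i).map ψ = b i := by
    have hdvd (i) : ((f i).map ψ).1 ∣ (a i).map ψ := Polynomial.map_dvd ψ (hfa i)
    constructor <;> intro hmap
    · have ha := h.isArcFamily.map ψ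
      simp only [Polynomial.map_map, hψ] at ha
      exact congrFun (hb_unique _ ⟨ha, fun i => hmap i ▸ hdvd i⟩)
    · refine congrFun (hfactor.unique ⟨?_, fun i => hmap i ▸ hdvd i⟩ ⟨hg, hgb⟩)
      simpa [Polynomial.map_prod] using congrArg (Polynomial.map ψ) hf
  simpa only [and_congr_right_iff.mpr (hmap_iff _)] using h.existsUnique_ringHom φ b hb

end Weierstrass

section LocalRingOfRetract

variable {R B K D : Type*} [CommRing R] [CommRing B] [Field K] [CommRing D] [Algebra B K]
  [IsFractionRing B K] {s : B →+* R} {ρ : R →+* B}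

theorem isUnit_map_of_retract {g : R →+* D} {φ : K →+* D} (hρs : ρ.comp s = .id B)
    (hφ : φ.comp (algebraMap B K) = g.comp s) (hnil : ∀ p ∈ RingHom.ker ρ, IsNilpotent (g p))
    {x : R} (hx : ρ x ≠ 0) : IsUnit (g x) := by
  have hunit : IsUnit (g (s (ρ x))) := by
    rw [← RingHom.comp_apply, ← hφ]
    exact (IsUnit.mk0 _ (by simpa using hx)).map φ
  have hmem : x - s (ρ x) ∈ RingHom.ker ρ := by
    rw [RingHom.sub_mem_ker_iff, ← RingHom.comp_apply, hρs, RingHom.id_apply]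
  simpa using (hnil _ hmem).isUnit_add_left_of_commute hunit (Commute.all _ _)

theorem exists_coefficientField {P : Ideal R} [P.IsPrime] (hρs : ρ.comp s = .id B)
    (hρ : RingHom.ker ρ = P) :
    ∃ κ : K →+* Localization.AtPrime P,
      κ.comp (algebraMap B K) = (algebraMap R (Localization.AtPrime P)).comp s ∧
      ∀ a, ∃ c, a - κ c ∈ IsLocalRing.maximalIdeal (Localization.AtPrime P) := by
  have : IsDomain B := (IsFractionRing.injective B K).isDomain _
  have hs (b : nonZeroDivisors B) :
      IsUnit ((algebraMap R (Localization.AtPrime P)).comp s b) := by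
    refine IsLocalization.map_units _ (⟨s b, fun hb => nonZeroDivisors.coe_ne_zero b ?_⟩ :
      P.primeCompl)
    rwa [← hρ, SetLike.mem_coe, RingHom.mem_ker, ← RingHom.comp_apply, hρs] at hb
  have hε (y : P.primeCompl) : IsUnit ((algebraMap B K).comp ρ y) :=
    IsUnit.mk0 _ (by simpa [← RingHom.mem_ker, hρ, -SetLike.coe_mem] using y.2)
  let κ : K →+* Localization.AtPrime P := IsLocalization.lift hs
  let ε : Localization.AtPrime P →+* K := IsLocalization.lift hε
  have hκ : κ.comp (algebraMap B K) = (algebraMap R _).comp s := IsLocalization.lift_comp hs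
  have hεκ : ε.comp κ = .id K := by
    refine IsLocalization.ringHom_ext (nonZeroDivisors B) ?_
    rw [RingHom.comp_assoc, hκ, ← RingHom.comp_assoc, IsLocalization.lift_comp, RingHom.comp_assoc,
      hρs, RingHom.comp_id, RingHom.id_comp]
  refine ⟨κ, hκ, fun a => ⟨ε a, IsLocalRing.le_maximalIdeal (RingHom.ker_ne_top ε) ?_⟩⟩
  rw [RingHom.sub_mem_ker_iff, ← RingHom.comp_apply, hεκ, RingHom.id_apply]

theorem existsUnique_localization_quotient_lift {P J : Ideal R} [P.IsPrime] {g : R →+* D}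
    (hg : ∀ x ∉ P, IsUnit (g x)) (hJ : J ≤ RingHom.ker g) :
    ∃! ψ : Localization.AtPrime P ⧸ J.map (algebraMap R (Localization.AtPrime P)) →+* D,
      ψ.comp (algebraMap R _) = g := by
  let ψ : Localization.AtPrime P →+* D :=
    IsLocalization.lift (M := P.primeCompl) fun x => hg x x.2
  have hψ : ψ.comp (algebraMap R _) = g := IsLocalization.lift_comp _
  have hJψ : J.map (algebraMap R _) ≤ RingHom.ker ψ := by
    rw [Ideal.map_le_iff_le_comap, RingHom.comap_ker, hψ]
    exact hJ
  refine ⟨Ideal.Quotient.lift _ ψ hJψ, hψ, fun ψ' hψ' => Ideal.Quotient.ringHom_ext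
    (IsLocalization.ringHom_ext P.primeCompl ?_)⟩
  exact hψ'.trans hψ.symm

theorem moduleLength_localizedModule_quotient (J P : Ideal R) [P.IsPrime] :
    moduleLength (Localization P.primeCompl) (LocalizedModule P.primeCompl (R ⧸ J)) =
      Module.length (Localization.AtPrime P ⧸ J.map (algebraMap R (Localization.AtPrime P)))
        (Localization.AtPrime P ⧸ J.map (algebraMap R (Localization.AtPrime P))) := by
  rw [← Module.length_eq_of_surjective (S := Localization.AtPrime P) Ideal.Quotient.mk_surjective,
    ← Ideal.localized'_eq_map (Localization.AtPrime P) P.primeCompl J, moduleLength,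
    ← Module.length_eq_height]
  exact (IsLocalizedModule.linearEquiv P.primeCompl
    (LocalizedModule.mkLinearMap P.primeCompl (R ⧸ J))
    (J.toLocalizedQuotient' (Localization.AtPrime P) P.primeCompl
      (Algebra.linearMap R (Localization.AtPrime P)))).extendScalarsOfIsLocalization
      P.primeCompl (Localization.AtPrime P) |>.length_eq

end LocalRingOfRetract

theorem length_eq_finrank_of_residueField {K A : Type*} [Field K] [CommRing A] [IsLocalRing A]
    [Algebra K A] [Module.Finite K A]
    (h : ∀ a : A, ∃ c : K, a - algebraMap K A c ∈ IsLocalRing.maximalIdeal A) :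
    Module.length A A = Module.finrank K A := by
  have : IsLocalHom (algebraMap K A) :=
    ⟨fun c hc => IsUnit.mk0 c (by rintro rfl; simp at hc)⟩
  have hsurj : Function.Surjective
      (algebraMap (IsLocalRing.ResidueField K) (IsLocalRing.ResidueField A)) := fun x => by
    obtain ⟨a, rfl⟩ := IsLocalRing.residue_surjective x
    obtain ⟨c, hc⟩ := h a
    refine ⟨IsLocalRing.residue K c, ?_⟩
    rw [IsLocalRing.ResidueField.algebraMap_residue, eq_comm, ← sub_eq_zero, ← map_sub]
    exact (IsLocalRing.residue_eq_zero_iff _).mpr hc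
  have := IsLocalRing.length_restrictScalars K A A
  rwa [Module.length_eq_of_surjective hsurj, Module.length_eq_one
    (IsLocalRing.ResidueField A) (IsLocalRing.ResidueField A), mul_one,
    Module.length_eq_finrank, eq_comm] at this

theorem length_quotient_eq_finrank {K L : Type*} [Field K] [CommRing L] [IsLocalRing L]
    {I : Ideal L} [Nontrivial (L ⧸ I)] [Algebra K (L ⧸ I)] [Module.Finite K (L ⧸ I)] (κ : K →+* L)
    (hκ : algebraMap K (L ⧸ I) = (Ideal.Quotient.mk I).comp κ)
    (hres : ∀ a, ∃ c, a - κ c ∈ IsLocalRing.maximalIdeal L) :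
    Module.length (L ⧸ I) (L ⧸ I) = Module.finrank K (L ⧸ I) := by
  have := IsLocalRing.of_surjective' (Ideal.Quotient.mk I) Ideal.Quotient.mk_surjective
  have := IsLocalHom.of_surjective (Ideal.Quotient.mk I) Ideal.Quotient.mk_surjective
  refine length_eq_finrank_of_residueField fun x => ?_
  obtain ⟨a, rfl⟩ := Ideal.Quotient.mk_surjective x
  obtain ⟨c, hc⟩ := hres a
  refine ⟨c, ?_⟩
  rw [hκ, RingHom.comp_apply, ← map_sub]
  exact map_mem_nonunits_iff (Ideal.Quotient.mk I) _ |>.mpr hc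

section MonicArc

open Polynomial

variable {D : Type*} [CommRing D] {N : ℕ}

/-- The arc with coefficients `z` in degrees `< N`, made monic by the term `X ^ N`. -/
noncomputable def monicArc (z : Fin N → D) : D[X] :=
  ∑ l, C (z l) * X ^ (l : ℕ) + X ^ N

theorem map_monicArc {D' : Type*} [CommRing D'] (ψ : D →+* D') (z : Fin N → D) :
    (monicArc z).map ψ = monicArc (ψ ∘ z) := by
  simp [monicArc, Polynomial.map_sum]

theorem monic_monicArc (z : Fin N → D) : (monicArc z).Monic := by
  rw [monicArc, add_comm]
  exact monic_X_pow_add (degree_sum_fin_lt z)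

theorem coeff_monicArc (z : Fin N → D) (j : ℕ) :
    (monicArc z).coeff j = if h : j < N then z ⟨j, h⟩ else if j = N then 1 else 0 := by
  rw [monicArc, coeff_add, finsetSum_coeff, coeff_X_pow]
  simp only [coeff_C_mul_X_pow]
  by_cases h : j < N
  · rw [dif_pos h, if_neg h.ne, add_zero, Finset.sum_eq_single ⟨j, h⟩] <;> grind
  · rw [dif_neg h, Finset.sum_eq_zero fun l _ => if_neg (by omega), zero_add]

theorem degree_sub_monicArc_lt_iff {t : ℕ} (ht : t ≤ N) {b : D[X]} {z : Fin N → D} :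
    (b - monicArc z).degree < t ↔
      b = monicArc (fun l : Fin N => b.coeff l) ∧ ∀ l : Fin N, t ≤ l → b.coeff l = z l := by
  rw [degree_lt_iff_coeff_zero]
  simp only [coeff_sub, sub_eq_zero, coeff_monicArc, Polynomial.ext_iff]
  constructor <;> grind

theorem X_pow_dvd_prod_monicArc_iff {ι : Type*} [Fintype ι] {z : ι → Fin N → D} :
    X ^ N ∣ ∏ i, monicArc (z i) ↔ X ^ N ∣ ∏ i, ∑ l, C (z i l) * X ^ (l : ℕ) := by
  simp only [← Ideal.mem_span_singleton, ← Ideal.Quotient.eq_zero_iff_mem, map_prod, monicArc,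
    map_add]
  rw [Ideal.Quotient.eq_zero_iff_mem.mpr (Ideal.mem_span_singleton_self _)]
  simp only [add_zero]

end MonicArc

section Rename

variable {σ τ k : Type*} [CommRing k] {e : τ → σ}

theorem ker_killCompl (he : Function.Injective e) :
    RingHom.ker (MvPolynomial.killCompl (R := k) he) =
      Ideal.span (MvPolynomial.X '' (Set.range e)ᶜ) := by
  set I : Ideal (MvPolynomial σ k) := Ideal.span (MvPolynomial.X '' (Set.range e)ᶜ)
  refine le_antisymm (fun f hf => ?_) (Ideal.span_le.mpr ?_)
  · have hmk : (Ideal.Quotient.mkₐ k I).comp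
        ((MvPolynomial.rename e).comp (MvPolynomial.killCompl he)) = Ideal.Quotient.mkₐ k I := by
      refine MvPolynomial.algHom_ext fun s => ?_
      by_cases hs : s ∈ Set.range e
      · obtain ⟨j, rfl⟩ := hs
        have hX := MvPolynomial.killCompl_rename_app (R := k) he (MvPolynomial.X j)
        rw [MvPolynomial.rename_X] at hX
        simp [hX]
      · have hX : Ideal.Quotient.mk I (MvPolynomial.X s) = 0 :=
          Ideal.Quotient.eq_zero_iff_mem.mpr (Ideal.subset_span ⟨s, hs, rfl⟩)
        simp_all [MvPolynomial.killCompl]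
    have := AlgHom.congr_fun hmk f
    rw [AlgHom.comp_apply, AlgHom.comp_apply, RingHom.mem_ker.mp hf, map_zero, map_zero] at this
    exact Ideal.Quotient.eq_zero_iff_mem.mp this.symm
  · rintro _ ⟨s, hs, rfl⟩
    simp_all [MvPolynomial.killCompl]

variable {D : Type*} [CommRing D]

theorem ringHom_ext_of_comp_rename {g g' : MvPolynomial σ k →+* D}
    (hcomp : g.comp (MvPolynomial.rename e : _ →ₐ[k] _).toRingHom =
      g'.comp (MvPolynomial.rename e : _ →ₐ[k] _).toRingHom)
    (hX : ∀ s ∉ Set.range e, g (MvPolynomial.X s) = g' (MvPolynomial.X s)) : g = g' := by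
  refine MvPolynomial.ringHom_ext (fun c => ?_) fun s => ?_
  · simpa using RingHom.congr_fun hcomp (MvPolynomial.C c)
  · by_cases hs : s ∈ Set.range e
    · obtain ⟨j, rfl⟩ := hs
      simpa using RingHom.congr_fun hcomp (MvPolynomial.X j)
    · exact hX s hs

theorem exists_ringHom_comp_rename (he : Function.Injective e) (φ : MvPolynomial τ k →+* D)
    (z : σ → D) : ∃ g : MvPolynomial σ k →+* D,
      g.comp (MvPolynomial.rename e : _ →ₐ[k] _) = φ ∧
      ∀ s ∉ Set.range e, g (MvPolynomial.X s) = z s := by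
  refine ⟨MvPolynomial.eval₂Hom (φ.comp MvPolynomial.C)
    (Function.extend e (fun j => φ (MvPolynomial.X j)) z), ?_, fun s hs => ?_⟩
  · ext j <;> simp [he.extend_apply]
  · simp [Function.extend_apply' _ _ _ hs]

end Rename

section Jets

open Polynomial

variable {k : Type u} [Field k] {m n r : ℕ} {hrn : r ≤ n} {t : Fin r → ℕ}

/-- The `i`-th arc of the point `g` of the space of jets, made monic by the invisible term
`X ^ (m + 1)`. -/
noncomputable def jetArc {D : Type*} [CommRing D] (hrn : r ≤ n) (g : JetRing k m n →+* D)
    (i : Fin r) : D[X] :=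
  monicArc fun l => g (MvPolynomial.X (Fin.castLE hrn i, l))

theorem map_jetArc {D D' : Type*} [CommRing D] [CommRing D'] (g : JetRing k m n →+* D)
    (ψ : D →+* D') (i : Fin r) : (jetArc hrn g i).map ψ = jetArc hrn (ψ.comp g) i :=
  map_monicArc ψ _

theorem jetIdeal_le_ker_iff {D : Type*} [CommRing D] (g : JetRing k m n →+* D) :
    jetIdeal k m n r hrn ≤ RingHom.ker g ↔ X ^ (m + 1) ∣ ∏ i, jetArc hrn g i := by
  have hmap : ∏ i : Fin r, ∑ l : Fin (m + 1),
        C (g (MvPolynomial.X (Fin.castLE hrn i, l))) * X ^ (l : ℕ) =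
      (∏ i : Fin r, ∑ l : Fin (m + 1),
        C (MvPolynomial.X (Fin.castLE hrn i, l) : JetRing k m n) * X ^ (l : ℕ)).map g := by
    simp [Polynomial.map_prod, Polynomial.map_sum]
  simp only [jetArc]
  rw [X_pow_dvd_prod_monicArc_iff, hmap, X_pow_dvd_iff, jetIdeal, Ideal.span_le]
  simp only [coeff_map, Set.image_subset_iff, Nat.lt_succ_iff]
  rfl

/-- The jet variables that do not vanish on the component, i.e. those outside the generators of
`compPrime`. -/
def highVars (m n : ℕ) {r : ℕ} (t : Fin r → ℕ) : Set (Fin n × Fin (m + 1)) :=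
  {s | ∀ h : s.1.val < r, t ⟨s.1, h⟩ ≤ s.2}

/-- The coordinate ring of the component, as the polynomial ring in `highVars`. -/
abbrev ComponentRing (k : Type*) [Field k] (m n : ℕ) {r : ℕ} (t : Fin r → ℕ) : Type _ :=
  MvPolynomial (highVars m n t) k

/-- The restriction of functions from the space of jets to the component. -/
noncomputable def restrictComponent (k : Type*) [Field k] (m n : ℕ) {r : ℕ} (t : Fin r → ℕ) :
    JetRing k m n →+* ComponentRing k m n t :=
  (MvPolynomial.killCompl (R := k)
    (Subtype.val_injective (p := (· ∈ highVars m n t)))).toRingHom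

/-- The section of `restrictComponent` including `highVars` into all jet variables. -/
noncomputable def includeComponent (k : Type*) [Field k] (m n : ℕ) {r : ℕ} (t : Fin r → ℕ) :
    ComponentRing k m n t →+* JetRing k m n :=
  (MvPolynomial.rename (R := k) (Subtype.val (p := (· ∈ highVars m n t)))).toRingHom

theorem restrictComponent_comp_includeComponent :
    (restrictComponent k m n t).comp (includeComponent k m n t) = .id _ :=
  RingHom.ext fun x => MvPolynomial.killCompl_rename_app _ x

theorem includeComponent_restrictComponent_X {s : Fin n × Fin (m + 1)}
    (hs : s ∈ highVars m n t) :
    includeComponent k m n t (restrictComponent k m n t (MvPolynomial.X s)) =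
      MvPolynomial.X s := by
  have hX : MvPolynomial.X s = includeComponent k m n t (MvPolynomial.X ⟨s, hs⟩) := by
    simp [includeComponent]
  rw [hX]
  exact congrArg _ (RingHom.congr_fun restrictComponent_comp_includeComponent _)

theorem castLE_mem_highVars {i : Fin r} {l : Fin (m + 1)} :
    (Fin.castLE hrn i, l) ∈ highVars m n t ↔ t i ≤ l := by
  simp [highVars]

theorem notMem_highVars_iff {s : Fin n × Fin (m + 1)} :
    s ∉ highVars m n t ↔ ∃ (i : Fin r) (l : Fin (m + 1)), l < t i ∧ s = (Fin.castLE hrn i, l) := by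
  constructor
  · intro hs
    simp only [highVars, Set.mem_ofPred_eq, not_forall, not_le] at hs
    exact ⟨⟨s.1, hs.choose⟩, s.2, hs.choose_spec, rfl⟩
  · rintro ⟨i, l, hl, rfl⟩
    exact castLE_mem_highVars.not.mpr hl.not_ge

theorem ker_restrictComponent :
    RingHom.ker (restrictComponent k m n t) = compPrime k m n r hrn t := by
  refine (ker_killCompl (k := k) Subtype.val_injective).trans ?_
  rw [Subtype.range_coe, compPrime]
  congr 1
  ext p
  simp only [Set.mem_image, Set.mem_compl_iff, notMem_highVars_iff (hrn := hrn), Set.mem_ofPred_eq]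
  grind

theorem degree_sub_jetArc_lt_iff {D : Type*} [CommRing D] {g : JetRing k m n →+* D} {i : Fin r}
    (ht : t i ≤ m + 1) {b : D[X]} : (b - jetArc hrn g i).degree < t i ↔
      b = monicArc (fun l : Fin (m + 1) => b.coeff l) ∧
        ∀ l, (Fin.castLE hrn i, l) ∈ highVars m n t →
          b.coeff l = g (MvPolynomial.X (Fin.castLE hrn i, l)) := by
  simp only [jetArc, degree_sub_monicArc_lt_iff ht, castLE_mem_highVars]

theorem existsUnique_ringHom_jetRing {D : Type*} [CommRing D] (ht : ∀ i, t i ≤ m + 1)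
    (φ : ComponentRing k m n t →+* D) (b : Fin r → D[X])
    (hb : ∀ i, (b i - jetArc hrn (φ.comp (restrictComponent k m n t)) i).degree < t i) :
    ∃! g : JetRing k m n →+* D,
      g.comp (includeComponent k m n t) = φ ∧ ∀ i, jetArc hrn g i = b i := by
  simp only [degree_sub_jetArc_lt_iff (ht _)] at hb
  obtain ⟨g, hgφ, hg⟩ := exists_ringHom_comp_rename Subtype.val_injective φ
    fun s => if h : s.1 < r then (b ⟨s.1, h⟩).coeff s.2 else 0
  rw [Subtype.range_coe] at hg
  have hgb (i) : jetArc hrn g i = b i := by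
    rw [(hb i).1, jetArc]
    congr 1
    funext l
    by_cases hl : (Fin.castLE hrn i, l) ∈ highVars m n t
    · rw [(hb i).2 l hl]
      nth_rw 1 [← includeComponent_restrictComponent_X hl]
      exact RingHom.congr_fun hgφ _
    · simpa using hg (Fin.castLE hrn i, l) hl
  refine ⟨g, ⟨hgφ, hgb⟩, fun g' ⟨hg'φ, hg'b⟩ =>
    ringHom_ext_of_comp_rename (hg'φ.trans hgφ.symm) fun s hs => ?_⟩
  rw [Subtype.range_coe] at hs
  obtain ⟨i, l, -, rfl⟩ := (notMem_highVars_iff (hrn := hrn)).mp hs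
  simpa [jetArc, coeff_monicArc, l.is_le] using
    congrArg (coeff · l) ((hg'b i).trans (hgb i).symm)

theorem degree_jetArc_sub_lt {D : Type*} [CommRing D] (g : JetRing k m n →+* D) {i : Fin r}
    (ht : t i ≤ m + 1) :
    (jetArc hrn g i - jetArc hrn ((g.comp (includeComponent k m n t)).comp
      (restrictComponent k m n t)) i).degree < t i := by
  refine (degree_sub_jetArc_lt_iff ht).mpr
    ⟨by simp [jetArc, coeff_monicArc, Fin.is_le], fun l hl => ?_⟩
  simp [jetArc, coeff_monicArc, l.is_le, includeComponent_restrictComponent_X hl]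

/-- The generic `i`-th arc of the component, with coefficients in its function field. -/
noncomputable def genericArc (k : Type*) [Field k] (m : ℕ) {n r : ℕ} (hrn : r ≤ n) (t : Fin r → ℕ) :
    Fin r → (FractionRing (ComponentRing k m n t))[X] :=
  jetArc hrn ((algebraMap _ _).comp (restrictComponent k m n t))

theorem isUnit_coeff_genericArc {i : Fin r} (ht : t i ≤ m + 1) :
    IsUnit ((genericArc k m hrn t i).coeff (t i)) := by
  rw [genericArc, jetArc, coeff_monicArc]
  split_ifs with h h'
  · let l : Fin (m + 1) := ⟨t i, h⟩
    have hmem : (Fin.castLE hrn i, l) ∈ highVars m n t := castLE_mem_highVars.mpr le_rfl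
    refine IsUnit.mk0 _ fun h0 => MvPolynomial.X_ne_zero (R := k) (Fin.castLE hrn i, l) ?_
    rw [← includeComponent_restrictComponent_X hmem, IsFractionRing.injective
      (ComponentRing k m n t) (FractionRing (ComponentRing k m n t)) (h0.trans (map_zero _).symm),
      map_zero]
  · exact isUnit_one
  · omega

theorem isUnit_of_isArcFamily_jetArc {D : Type*} [CommRing D] (ht : ∀ i, t i ≤ m + 1)
    {g : JetRing k m n →+* D} {φ : FractionRing (ComponentRing k m n t) →+* D}
    (hg : g.comp (includeComponent k m n t) = φ.comp (algebraMap _ _))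
    (h : IsArcFamily t (fun i => (genericArc k m hrn t i).map φ) (jetArc hrn g))
    {x : JetRing k m n} (hx : x ∉ compPrime k m n r hrn t) : IsUnit (g x) := by
  have hunit := h.isUnit_coeff fun i => by
    rw [coeff_map]; exact (isUnit_coeff_genericArc (ht i)).map φ
  have hker : RingHom.ker (restrictComponent k m n t) = compPrime k m n r hrn t :=
    ker_restrictComponent
  have hle : compPrime k m n r hrn t ≤ (nilradical D).comap g := by
    refine Ideal.span_le.mpr ?_
    rintro _ ⟨i, l, hl, rfl⟩
    simpa [jetArc, coeff_monicArc, l.is_le, mem_nilradical] using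
      isNilpotent_coeff_of_X_pow_dvd_prod hunit h.X_pow_dvd_prod i hl
  exact isUnit_map_of_retract restrictComponent_comp_includeComponent hg.symm
    (fun p hp => hle (hker ▸ hp)) (mt RingHom.mem_ker.mpr (hker ▸ hx))

/-- The local ring of the jet scheme at the generic point of the component. -/
abbrev JetLocalRing (k : Type*) [Field k] (m : ℕ) {n r : ℕ} (hrn : r ≤ n) (t : Fin r → ℕ)
    [(compPrime k m n r hrn t).IsPrime] : Type _ :=
  Localization.AtPrime (compPrime k m n r hrn t) ⧸ Ideal.map (algebraMap (JetRing k m n)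
    (Localization.AtPrime (compPrime k m n r hrn t))) (jetIdeal k m n r hrn)

theorem isUniversalArcFamily_jetArc [(compPrime k m n r hrn t).IsPrime] (hsum : ∑ i, t i = m + 1)
    [Algebra (FractionRing (ComponentRing k m n t)) (JetLocalRing k m hrn t)]
    (hK : (algebraMap (FractionRing (ComponentRing k m n t)) (JetLocalRing k m hrn t)).comp
      (algebraMap (ComponentRing k m n t) _) =
        (algebraMap (JetRing k m n) (JetLocalRing k m hrn t)).comp (includeComponent k m n t)) :
    IsUniversalArcFamily t (genericArc k m hrn t)
      (jetArc (D := JetLocalRing k m hrn t) hrn (algebraMap (JetRing k m n) _)) := by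
  have ht (i) : t i ≤ m + 1 := hsum ▸ Finset.single_le_sum (by simp) (Finset.mem_univ i)
  constructor
  · have hJ : jetIdeal k m n r hrn ≤
        RingHom.ker (algebraMap (JetRing k m n) (JetLocalRing k m hrn t)) := fun x hx =>
      Ideal.Quotient.eq_zero_iff_mem.mpr (Ideal.mem_map_of_mem _ hx)
    refine ⟨fun i => ?_, hsum.symm ▸ (jetIdeal_le_ker_iff _).mp hJ⟩
    rw [genericArc, map_jetArc, ← RingHom.comp_assoc, hK]
    exact degree_jetArc_sub_lt _ (ht i)
  · intro D _ φ b hb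
    obtain ⟨g, ⟨hgφ, hgb⟩, hg_unique⟩ := existsUnique_ringHom_jetRing ht (φ.comp (algebraMap _ _)) b
      fun i => by simpa only [genericArc, map_jetArc, RingHom.comp_assoc] using hb.degree_sub_lt i
    obtain rfl : jetArc hrn g = b := funext hgb
    have hJ : jetIdeal k m n r hrn ≤ RingHom.ker g :=
      (jetIdeal_le_ker_iff g).mpr (hsum ▸ hb.X_pow_dvd_prod)
    refine (existsUnique_congr fun ψ => ?_).mpr (existsUnique_localization_quotient_lift
      (fun x => isUnit_of_isArcFamily_jetArc ht hgφ hb) hJ)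
    have hψ : ψ.comp (algebraMap _ _) = φ ↔ (ψ.comp (algebraMap (JetRing k m n) _)).comp
        (includeComponent k m n t) = φ.comp (algebraMap (ComponentRing k m n t) _) := by
      rw [RingHom.comp_assoc, ← hK, ← RingHom.comp_assoc]
      exact ⟨congrArg (RingHom.comp · _), fun h =>
        IsLocalization.ringHom_ext (nonZeroDivisors (ComponentRing k m n t)) h⟩
    simp only [map_jetArc, hψ]
    exact ⟨hg_unique _, fun h => by rw [h]; exact ⟨hgφ, fun _ => rfl⟩⟩

end Jets

theorem multiplicity_of_jet_scheme_along_component_general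
    (k : Type*) [Field k] (m n r : ℕ) (hrn : r ≤ n) (t : Fin r → ℕ) (hsum : ∑ i, t i = m + 1)
    [(compPrime k m n r hrn t).IsPrime] :
    moduleLength (Localization (compPrime k m n r hrn t).primeCompl)
      (LocalizedModule (compPrime k m n r hrn t).primeCompl
        (JetRing k m n ⧸ jetIdeal k m n r hrn)) =
      ((Nat.factorial (m + 1) / ∏ i, Nat.factorial (t i) : ℕ) : ℕ∞) := by
  have ht (i) : t i ≤ m + 1 := hsum ▸ Finset.single_le_sum (by simp) (Finset.mem_univ i)
  obtain ⟨κ, hκ, hres⟩ := exists_coefficientField (K := FractionRing (ComponentRing k m n t))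
    restrictComponent_comp_includeComponent
    (ker_restrictComponent : _ = compPrime k m n r hrn t)
  let _ : Algebra (FractionRing (ComponentRing k m n t)) (JetLocalRing k m hrn t) :=
    ((Ideal.Quotient.mk _).comp κ).toAlgebra
  have huniv := isUniversalArcFamily_jetArc hsum (congrArg (Ideal.Quotient.mk _).comp hκ)
  obtain ⟨f, hf⟩ := huniv.exists_isUniversalFactorization (fun i => monic_monicArc _)
    fun i => isUnit_coeff_genericArc (ht i)
  have := hf.nontrivial
  have hrank : Module.finrank (FractionRing (ComponentRing k m n t)) (JetLocalRing k m hrn t) *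
      ∏ i, (t i).factorial = (m + 1).factorial := by
    simpa [hsum] using hf.finrank_mul_prod_factorial (Polynomial.monic_X_pow _)
  have := Module.finite_of_finrank_pos (Nat.pos_of_mul_pos_right
    (hrank ▸ (m + 1).factorial_pos))
  rw [moduleLength_localizedModule_quotient, length_quotient_eq_finrank κ rfl hres, ← hrank,
    Nat.mul_div_cancel _ (Finset.prod_pos fun i _ => (t i).factorial_pos)]

/-- **Main Theorem** (multiplicity of jet schemes of a simple normal crossing divisor).
Let `k` be an algebraically closed field of characteristic zero, and `t_1, …, t_r`
nonnegative integers with each `t_i ≤ m + 1` and `t_1 + ⋯ + t_r = m + 1`.  Then the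
multiplicity of the `m`-th jet scheme of `X = Spec k[x_1,…,x_n]/(x_1⋯x_r)` along the
component defined by `P = P(m; t_1, …, t_r)`, i.e. the length of the `R_P`-module
`(R/J_m)_P`, equals `(m+1)!/(t_1! ⋯ t_r!)`. -/
theorem multiplicity_of_jet_scheme_along_component
    (k : Type*) [Field k] [IsAlgClosed k] [CharZero k]
    (m n r : ℕ) (hr : 1 ≤ r) (hrn : r ≤ n)
    (t : Fin r → ℕ) (ht : ∀ i, t i ≤ m + 1) (hsum : ∑ i, t i = m + 1)
    [hP : (compPrime k m n r hrn t).IsPrime] :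
    moduleLength (Localization (compPrime k m n r hrn t).primeCompl)
      (LocalizedModule (compPrime k m n r hrn t).primeCompl
        (JetRing k m n ⧸ jetIdeal k m n r hrn)) =
      ((Nat.factorial (m + 1) / ∏ i, Nat.factorial (t i) : ℕ) : ℕ∞) :=
  multiplicity_of_jet_scheme_along_component_general k m n r hrn t hsum
end

section
/- Let k be an algebraically closed field of characteristic zero. Every minimal prime of the ideal J_m ⊆ R has height m+1; in particular, the m-th jet scheme of X is pure dimensional of codimension m+1 in affine space of dimension n(m+1). -/
/-! Let `x_i(t) = ∑ x_i^(l) t^l` and let `Q` be a prime containing `J_m`. Over the domain `R ⧸ Q`,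
the prime power `t^(m+1)` divides `∏ x_i(t)`, so it splits as `t^(t_1) ⋯ t^(t_r)` with
`t_1 + ⋯ + t_r = m + 1` and `t^(t_i)` dividing `x_i(t)`. Thus `Q` contains the `m + 1` variables
`x_i^(j)` with `j < t_i`, and so has height at least `m + 1`. Since `J_m` has `m + 1` generators,
Krull's height theorem gives equality when `Q` is minimal over `J_m`. -/

lemma exists_sum_eq_and_forall_pow_dvd_of_pow_dvd_prod {M ι : Type*} [CommMonoidWithZero M]
    [IsCancelMulZero M] [Fintype ι] {p : M} (hp : Prime p) {f : ι → M} {N : ℕ}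
    (h : p ^ N ∣ ∏ i, f i) : ∃ t : ι → ℕ, ∑ i, t i = N ∧ ∀ i, p ^ t i ∣ f i := by
  classical
  induction N with
  | zero => exact ⟨0, by simp⟩
  | succ N ih =>
    obtain ⟨t, rfl, ht⟩ := ih ((pow_dvd_pow p N.le_succ).trans h)
    choose g hg using ht
    have hp_dvd : p ∣ ∏ i, g i := by
      rw [Finset.prod_congr rfl fun i _ => hg i, Finset.prod_mul_distrib,
        Finset.prod_pow_eq_pow_sum, pow_succ] at h
      exact (mul_dvd_mul_iff_left (pow_ne_zero _ hp.ne_zero)).mp h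
    obtain ⟨i₀, -, hi₀⟩ := hp.exists_mem_finset_dvd hp_dvd
    refine ⟨t + Pi.single i₀ 1, by simp [Finset.sum_add_distrib], fun i => ?_⟩
    rw [hg i, Pi.add_apply, pow_add]
    refine mul_dvd_mul_left _ ?_
    obtain rfl | hi := eq_or_ne i i₀
    · simpa using hi₀
    · simp [hi]

section IdealsOfVariables

variable {R σ τ : Type*} [CommRing R]

lemma ker_killCompl_s2 {f : σ → τ} (hf : f.Injective) :
    RingHom.ker (MvPolynomial.killCompl hf : MvPolynomial τ R →ₐ[R] MvPolynomial σ R) =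
      Ideal.span (MvPolynomial.X '' (Set.range f)ᶜ) := by
  set I : Ideal (MvPolynomial τ R) := Ideal.span (MvPolynomial.X '' (Set.range f)ᶜ)
  refine le_antisymm (fun p hp => ?_) (Ideal.span_le.mpr ?_)
  · have rename_killCompl_mod : (Ideal.Quotient.mkₐ R I).comp
        ((MvPolynomial.rename f).comp (MvPolynomial.killCompl hf)) = Ideal.Quotient.mkₐ R I := by
      ext i
      by_cases hi : i ∈ Set.range f
      · obtain ⟨j, rfl⟩ := hi
        rw [← MvPolynomial.rename_X (R := R) f j]
        simp only [AlgHom.comp_apply, MvPolynomial.killCompl_rename_app]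
      · simpa [MvPolynomial.killCompl, hi] using
          (Ideal.Quotient.eq_zero_iff_mem.mpr (Ideal.subset_span (Set.mem_image_of_mem _ hi))).symm
    have hp_mod := DFunLike.congr_fun rename_killCompl_mod p
    simp only [AlgHom.comp_apply, RingHom.mem_ker.mp hp, map_zero] at hp_mod
    exact Ideal.Quotient.eq_zero_iff_mem.mp hp_mod.symm
  · rintro _ ⟨i, hi, rfl⟩
    rw [SetLike.mem_coe, RingHom.mem_ker, MvPolynomial.killCompl, MvPolynomial.aeval_X, dif_neg hi]

lemma X_mem_span_X_image_iff [Nontrivial R] {S : Set σ} {i : σ} :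
    (MvPolynomial.X i : MvPolynomial σ R) ∈ Ideal.span (MvPolynomial.X '' S) ↔ i ∈ S := by
  classical
  simp [MvPolynomial.mem_ideal_span_X_image, MvPolynomial.support_X, Finsupp.single_apply]

variable [IsDomain R]

lemma isPrime_span_X_image (S : Set σ) :
    (Ideal.span (MvPolynomial.X '' S) : Ideal (MvPolynomial σ R)).IsPrime := by
  have hker := ker_killCompl_s2 (R := R) (Subtype.val_injective (p := (· ∈ Sᶜ)))
  rw [Subtype.range_coe, compl_compl] at hker
  exact hker ▸ RingHom.ker_isPrime _

lemma card_le_height_span_X_image (S : Finset σ) :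
    (S.card : ℕ∞) ≤ (Ideal.span (MvPolynomial.X '' S) : Ideal (MvPolynomial σ R)).height := by
  classical
  induction S using Finset.induction_on with
  | empty => simp
  | insert a S ha ih =>
    have := isPrime_span_X_image (R := R) (S : Set σ)
    have := isPrime_span_X_image (R := R) (↑(insert a S) : Set σ)
    have hlt : (Ideal.span (MvPolynomial.X '' S) : Ideal (MvPolynomial σ R)) <
        Ideal.span (MvPolynomial.X '' (insert a S : Finset σ)) := by
      refine SetLike.lt_iff_le_and_exists.mpr
        ⟨Ideal.span_mono (Set.image_mono (by simp)), MvPolynomial.X a, ?_, ?_⟩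
      · simp [X_mem_span_X_image_iff]
      · simpa [X_mem_span_X_image_iff] using ha
    rw [Finset.card_insert_of_notMem ha, Nat.cast_succ]
    exact (add_le_add_left ih 1).trans (Ideal.height_add_one_le_of_lt_of_isPrime hlt)

end IdealsOfVariables

section JetIdeal

variable {k : Type*} [Field k] {m n r : ℕ}

/-- The generic `m`-jet `x_i(t) = x_i^(0) + x_i^(1) t + ⋯ + x_i^(m) t^m` in the `i`-th coordinate.
The parameter `t` is the polynomial variable, so the `g_j` are the coefficients of a product of
such polynomials. -/
noncomputable def genericJet (k : Type*) [Field k] (m : ℕ) {n : ℕ} (i : Fin n) :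
    Polynomial (JetRing k m n) :=
  ∑ l : Fin (m + 1), Polynomial.C (MvPolynomial.X (i, l)) * Polynomial.X ^ (l : ℕ)

lemma coeff_genericJet (i : Fin n) (j : ℕ) :
    (genericJet k m i).coeff j =
      if hj : j < m + 1 then MvPolynomial.X (i, ⟨j, hj⟩) else 0 := by
  split_ifs with hj
  · obtain ⟨l, rfl⟩ : ∃ l : Fin (m + 1), (l : ℕ) = j := ⟨⟨j, hj⟩, rfl⟩
    simp [genericJet, Polynomial.coeff_X_pow, ← Fin.ext_iff]
  · have ne_of_fin (l : Fin (m + 1)) : j ≠ l := fun hl => hj (hl ▸ l.isLt)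
    simp [genericJet, Polynomial.coeff_X_pow, ne_of_fin]

lemma jetIdeal_le_iff (hrn : r ≤ n) {I : Ideal (JetRing k m n)} :
    jetIdeal k m n r hrn ≤ I ↔ Polynomial.X ^ (m + 1) ∣
      ∏ i : Fin r, (genericJet k m (Fin.castLE hrn i)).map (Ideal.Quotient.mk I) := by
  rw [jetIdeal, Ideal.span_le, Set.image_subset_iff, Polynomial.X_pow_dvd_iff,
    ← Polynomial.map_prod]
  simp only [Polynomial.coeff_map, Ideal.Quotient.eq_zero_iff_mem, Nat.lt_succ_iff]
  rfl

lemma compPrime_le_iff (hrn : r ≤ n) {t : Fin r → ℕ} {I : Ideal (JetRing k m n)} :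
    compPrime k m n r hrn t ≤ I ↔ ∀ i : Fin r, Polynomial.X ^ t i ∣
      (genericJet k m (Fin.castLE hrn i)).map (Ideal.Quotient.mk I) := by
  simp only [Polynomial.X_pow_dvd_iff, Polynomial.coeff_map, Ideal.Quotient.eq_zero_iff_mem,
    coeff_genericJet]
  refine Ideal.span_le.trans ⟨fun h i j hj => ?_, ?_⟩
  · split_ifs with hjm
    · exact h ⟨i, ⟨j, hjm⟩, hj, rfl⟩
    · exact I.zero_mem
  · rintro h _ ⟨i, j, hj, rfl⟩
    simpa only [j.isLt, dif_pos, Fin.eta, SetLike.mem_coe] using h i j hj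

lemma exists_compPrime_le_of_jetIdeal_le (hrn : r ≤ n) {Q : Ideal (JetRing k m n)} [Q.IsPrime]
    (hQ : jetIdeal k m n r hrn ≤ Q) :
    ∃ t : Fin r → ℕ, ∑ i, t i = m + 1 ∧ compPrime k m n r hrn t ≤ Q := by
  simp only [compPrime_le_iff]
  exact exists_sum_eq_and_forall_pow_dvd_of_pow_dvd_prod Polynomial.prime_X
    ((jetIdeal_le_iff hrn).mp hQ)

lemma sum_le_height_compPrime (hrn : r ≤ n) {t : Fin r → ℕ} (ht : ∀ i, t i ≤ m + 1) :
    (∑ i, t i : ℕ) ≤ (compPrime k m n r hrn t).height := by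
  let x : (Σ i, Fin (t i)) ↪ Fin n × Fin (m + 1) :=
    ⟨fun p => (Fin.castLE hrn p.1, Fin.castLE (ht p.1) p.2), by
      rintro ⟨i, j⟩ ⟨i', j'⟩ h
      obtain ⟨hi, hj⟩ := Prod.mk.inj h
      obtain rfl := Fin.castLE_injective hrn hi
      obtain rfl := Fin.castLE_injective (ht i) hj
      rfl⟩
  calc ((∑ i, t i : ℕ) : ℕ∞) = (Finset.univ.map x).card := by simp
    _ ≤ (Ideal.span (MvPolynomial.X '' ↑(Finset.univ.map x)) : Ideal (JetRing k m n)).height :=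
        card_le_height_span_X_image _
    _ ≤ (compPrime k m n r hrn t).height := by
        refine Ideal.height_mono (Ideal.span_mono ?_)
        rintro _ ⟨_, hp, rfl⟩
        obtain ⟨⟨i, j⟩, -, rfl⟩ := Finset.mem_map.mp hp
        exact ⟨i, Fin.castLE (ht i) j, j.2, rfl⟩

lemma le_height_of_jetIdeal_le (hrn : r ≤ n) {Q : Ideal (JetRing k m n)} [Q.IsPrime]
    (hQ : jetIdeal k m n r hrn ≤ Q) : (m + 1 : ℕ∞) ≤ Q.height := by
  obtain ⟨t, ht, htQ⟩ := exists_compPrime_le_of_jetIdeal_le hrn hQ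
  have ht_le (i : Fin r) : t i ≤ m + 1 :=
    ht ▸ Finset.single_le_sum (fun _ _ => Nat.zero_le _) (Finset.mem_univ i)
  calc (m + 1 : ℕ∞) = (∑ i, t i : ℕ) := by rw [ht]; rfl
    _ ≤ (compPrime k m n r hrn t).height := sum_le_height_compPrime hrn ht_le
    _ ≤ Q.height := Ideal.height_mono htQ

lemma height_le_of_mem_minimalPrimes_jetIdeal (hrn : r ≤ n) {Q : Ideal (JetRing k m n)}
    (hQ : Q ∈ (jetIdeal k m n r hrn).minimalPrimes) : Q.height ≤ (m + 1 : ℕ∞) := by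
  have hcard : (jetGen k m n r hrn '' Set.Iic m).ncard ≤ m + 1 := by
    simpa using Set.ncard_image_le (f := jetGen k m n r hrn) (Set.finite_Iic m)
  exact (Ideal.height_le_card_of_mem_minimalPrimes_span ((Set.finite_Iic m).image _) hQ).trans
    (mod_cast hcard)

end JetIdeal

theorem height_minimalPrimes_jetIdeal_general
    (k : Type*) [Field k] (m n r : ℕ) (hrn : r ≤ n)
    (Q : Ideal (JetRing k m n)) (hQ : Q ∈ (jetIdeal k m n r hrn).minimalPrimes) :
    Order.height (⟨Q, hQ.1.1⟩ : PrimeSpectrum (JetRing k m n)) = (m + 1 : ℕ∞) := by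
  have : Q.IsPrime := hQ.1.1
  rw [← PrimeSpectrum.height_eq_orderHeight]
  exact le_antisymm (height_le_of_mem_minimalPrimes_jetIdeal hrn hQ)
    (le_height_of_jetIdeal_le hrn hQ.1.2)

/-- Over an algebraically closed field of characteristic zero, every minimal prime of
`J_m` has height `m + 1`; in particular the `m`-th jet scheme of `X` is pure
dimensional of codimension `m + 1` in affine space of dimension `n(m + 1)`. -/
theorem height_minimalPrimes_jetIdeal
    (k : Type*) [Field k] [IsAlgClosed k] [CharZero k]
    (m n r : ℕ) (hr : 1 ≤ r) (hrn : r ≤ n)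
    (Q : Ideal (JetRing k m n)) (hQ : Q ∈ (jetIdeal k m n r hrn).minimalPrimes) :
    Order.height (⟨Q, hQ.1.1⟩ : PrimeSpectrum (JetRing k m n)) = (m + 1 : ℕ∞) :=
  height_minimalPrimes_jetIdeal_general k m n r hrn Q hQ
end

section
/- Let k be a field and let t_1,…,t_r be nonnegative integers with t_1+⋯+t_r = m+1; set P = P(m;t_1,…,t_r) and S = R_P/(g_1,…,g_m)R_P. Then g_0 = x_1^(0)x_2^(0)⋯x_r^(0) is a nonzerodivisor on S, and the image of each x_i^(0) for which t_i ≥ 1 is a nonunit of S. -/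
/-!
The sequence `g_0, …, g_m` is weakly regular already in `R`, by induction on its length. Its head
is `g_0 = ∏ x_i^(0)`, and a product may stand at the head of a weakly regular sequence as soon as
each of its factors may. Modulo `x_i^(0)`, the `i`-th factor of the product of jet series is `t`
times a series whose coefficients are again distinct variables, so `g_1, …, g_m` become the first
`m` coefficients of a product of the same kind.

Modulo `P` the `i`-th jet series is divisible by `t ^ t_i`, so `∑ t_i > m` puts all of
`g_0, …, g_m` in `P`. Weak regularity survives localization, and over the Noetherian local ring
`R_P` a weakly regular sequence in the maximal ideal may be permuted: `g_0` can be moved to the end.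
-/

open RingTheory.Sequence
open scoped Pointwise

section WeaklyRegular

variable {A M : Type*} [CommRing A] [AddCommGroup M] [Module A M]

theorem isWeaklyRegular_of_exact {M₁ M₂ M₃ : Type*} [AddCommGroup M₁] [AddCommGroup M₂]
    [AddCommGroup M₃] [Module A M₁] [Module A M₂] [Module A M₃] {f : M₁ →ₗ[A] M₂}
    {g : M₂ →ₗ[A] M₃} {rs : List A} (hf : Function.Injective f) (hfg : Function.Exact f g)
    (hg : Function.Surjective g) (h₁ : IsWeaklyRegular M₁ rs) (h₃ : IsWeaklyRegular M₃ rs) :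
    IsWeaklyRegular M₂ rs := by
  induction rs generalizing M₁ M₂ M₃ with
  | nil => exact .nil A M₂
  | cons r rs ih =>
    rw [isWeaklyRegular_cons_iff] at h₁ h₃
    have hf' : Function.Injective (QuotSMulTop.map r f) := by
      rw [← LinearMap.exact_zero_iff_injective (QuotSMulTop r M₁),
        ← map_zero (QuotSMulTop.map (M := M₁) r)]
      exact QuotSMulTop.map_first_exact_on_four_term_exact_of_isSMulRegular_last
        ((LinearMap.exact_zero_iff_injective M₁ f).mpr hf) hfg h₃.1
    exact .cons (isSMulRegular_of_range_eq_ker hf hfg.linearMap_ker_eq.symm h₁.1 h₃.1)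
      (ih hf' (QuotSMulTop.map_exact r hfg hg) (QuotSMulTop.map_surjective r hg) h₁.2 h₃.2)

theorem isWeaklyRegular_one_cons (rs : List A) : IsWeaklyRegular M (1 :: rs) := by
  refine .cons (.one M) ⟨fun i _ => ?_⟩
  have : Subsingleton (QuotSMulTop (1 : A) M) :=
    Submodule.Quotient.subsingleton_iff.mpr (one_smul A ⊤)
  have := (Submodule.mkQ_surjective
    (Ideal.ofList (rs.take i) • ⊤ : Submodule A (QuotSMulTop (1 : A) M))).subsingleton
  exact fun _ _ _ => Subsingleton.elim _ _

-- The exact sequence `0 → M / bM → M / abM → M / aM → 0`, with first map multiplication by `a`.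
theorem isWeaklyRegular_mul_cons {a b : A} {rs : List A} (ha : IsWeaklyRegular M (a :: rs))
    (hb : IsWeaklyRegular M (b :: rs)) : IsWeaklyRegular M (a * b :: rs) := by
  rw [isWeaklyRegular_cons_iff] at ha hb
  let μ : M →ₗ[A] M := DistribSMul.toLinearMap A M a
  have hμ : ((a * b) • ⊤ : Submodule A M) = (b • ⊤ : Submodule A M).map μ := mul_smul a b ⊤
  have hle : ((a * b) • ⊤ : Submodule A M) ≤ a • ⊤ :=
    hμ.trans_le (Submodule.map_mono le_top)
  let f : QuotSMulTop b M →ₗ[A] QuotSMulTop (a * b) M :=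
    Submodule.mapQ _ _ μ (Submodule.map_le_iff_le_comap.mp hμ.ge)
  let g : QuotSMulTop (a * b) M →ₗ[A] QuotSMulTop a M := Submodule.factor hle
  have hf : Function.Injective f := by
    have hμinj : Function.Injective μ := ha.1
    rw [← LinearMap.ker_eq_bot, Submodule.ker_mapQ, hμ, Submodule.comap_map_eq_of_injective hμinj,
      Submodule.mkQ_map_self]
  have hfg : Function.Exact f g := by
    rw [LinearMap.exact_iff, Submodule.ker_mapQ, Submodule.range_mapQ, Submodule.comap_id]
    exact congrArg _ (Submodule.map_top μ)
  exact .cons (ha.1.mul hb.1)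
    (isWeaklyRegular_of_exact hf hfg (Submodule.factor_surjective hle) hb.2 ha.2)

theorem isWeaklyRegular_prod_cons {ι : Type*} {a : ι → A} {rs : List A} (s : Finset ι)
    (h : ∀ i ∈ s, IsWeaklyRegular M (a i :: rs)) : IsWeaklyRegular M ((∏ i ∈ s, a i) :: rs) :=
  Finset.prod_induction a (fun x => IsWeaklyRegular M (x :: rs))
    (fun _ _ => isWeaklyRegular_mul_cons) (isWeaklyRegular_one_cons rs) h

theorem isWeaklyRegular_quotSMulTop_map_congr {κ : Type*} {x : A} {c d : κ → A} {l : List κ}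
    (h : ∀ j, x ∣ c j - d j) :
    IsWeaklyRegular (QuotSMulTop x M) (l.map c) ↔ IsWeaklyRegular (QuotSMulTop x M) (l.map d) := by
  refine (AddEquiv.refl (QuotSMulTop x M)).isWeaklyRegular_congr ?_
  rw [List.forall₂_map_left_iff, List.forall₂_map_right_iff, List.forall₂_same]
  intro j _ y
  obtain ⟨q, hq⟩ := h j
  have hx : x • q • y = 0 := Module.mem_annihilator.mp (QuotSMulTop.mem_annihilator M x) _
  rw [AddEquiv.refl_apply, AddEquiv.refl_apply, ← sub_eq_zero, ← sub_smul, hq, mul_smul, hx]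

end WeaklyRegular

section Family

variable {A M σ τ : Type*} [CommRing A] [AddCommGroup M] [Module A M]

/-- A family of ring elements is weakly regular on a module if each finite list of distinct members,
in whatever order, is a weakly regular sequence. Lists of indices keep members at different
indices apart even when they are equal as ring elements. -/
def IsWeaklyRegularFamily (M : Type*) [AddCommGroup M] [Module A M] (a : σ → A) : Prop :=
  ∀ ⦃l : List σ⦄, l.Nodup → IsWeaklyRegular M (l.map a)

namespace IsWeaklyRegularFamily

variable {a : σ → A}

theorem comp_injective (h : IsWeaklyRegularFamily M a) {e : τ → σ} (he : Function.Injective e) :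
    IsWeaklyRegularFamily M (a ∘ e) := fun l hl => by
  rw [← List.map_map]
  exact h (hl.map he)

theorem isSMulRegular (h : IsWeaklyRegularFamily M a) (v : σ) : IsSMulRegular M (a v) :=
  (isWeaklyRegular_singleton_iff M (a v)).mp (h (List.nodup_singleton v))

theorem quotSMulTop_comp (h : IsWeaklyRegularFamily M a) {v : σ} {e : τ → σ}
    (he : Function.Injective e) (hv : v ∉ Set.range e) :
    IsWeaklyRegularFamily (QuotSMulTop (a v) M) (a ∘ e) := fun l hl => by
  have hvl : v ∉ l.map e := fun hmem =>
    let ⟨w, _, hw⟩ := List.mem_map.mp hmem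
    hv ⟨w, hw⟩
  have hcons := h (List.nodup_cons.mpr ⟨hvl, hl.map he⟩)
  rw [List.map_cons, List.map_map, isWeaklyRegular_cons_iff] at hcons
  exact hcons.2

end IsWeaklyRegularFamily

theorem isWeaklyRegularFamily_X :
    IsWeaklyRegularFamily (MvPolynomial σ A) (MvPolynomial.X : σ → MvPolynomial σ A) := by
  intro l hl
  induction l using List.reverseRecOn with
  | nil => exact .nil _ _
  | append_singleton l v ih =>
    obtain ⟨hl, -, hvl⟩ := List.nodup_append.mp hl
    have hspan : (Ideal.ofList (l.map (MvPolynomial.X (R := A))) • ⊤ : Ideal (MvPolynomial σ A)) =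
        Ideal.span (MvPolynomial.X '' {w | w ∈ l}) := by
      rw [Ideal.smul_eq_mul, Ideal.mul_top, Ideal.ofList]
      exact congrArg Ideal.span (Set.ext fun _ => List.mem_map)
    rw [List.map_append, isWeaklyRegular_append_iff, List.map_singleton,
      isWeaklyRegular_singleton_iff, isSMulRegular_quotient_iff_mem_of_smul_mem, hspan]
    refine ⟨ih hl, fun p hp => MvPolynomial.mem_ideal_span_X_image.mpr fun d hd => ?_⟩
    rw [smul_eq_mul, mul_comm, MvPolynomial.mem_ideal_span_X_image] at hp
    obtain ⟨w, hw, hdw⟩ := hp (d + Finsupp.single v 1) <| by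
      rwa [MvPolynomial.mem_support_iff, MvPolynomial.coeff_mul_X, ← MvPolynomial.mem_support_iff]
    have hvw : v ≠ w := (hvl w hw v (List.mem_singleton_self v)).symm
    exact ⟨w, hw, by simpa [Finsupp.single_apply, hvw] using hdw⟩

end Family

section PolynomialCoeff

variable {A M ι : Type*} [CommRing A] [AddCommGroup M] [Module A M]

theorem coeff_sum_C_mul_X_pow {B : Type*} [Semiring B] {N : ℕ} (c : Fin N → B) (j : Fin N) :
    (∑ l, Polynomial.C (c l) * Polynomial.X ^ (l : ℕ)).coeff j = c j := by
  simp [Polynomial.finsetSum_coeff, Fin.val_inj]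

theorem coeff_prod_mem_of_lt_sum (I : Ideal A) {s : Finset ι} {p : ι → Polynomial A} {t : ι → ℕ}
    (hp : ∀ i ∈ s, ∀ j < t i, (p i).coeff j ∈ I) {l : ℕ} (hl : l < ∑ i ∈ s, t i) :
    (∏ i ∈ s, p i).coeff l ∈ I := by
  have hdvd : Polynomial.X ^ (∑ i ∈ s, t i) ∣ ∏ i ∈ s, (p i).map (Ideal.Quotient.mk I) := by
    rw [← Finset.prod_pow_eq_pow_sum]
    refine Finset.prod_dvd_prod_of_dvd _ _ fun i hi => Polynomial.X_pow_dvd_iff.mpr fun j hj => ?_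
    rw [Polynomial.coeff_map, Ideal.Quotient.eq_zero_iff_mem.mpr (hp i hi j hj)]
  rw [← Ideal.Quotient.eq_zero_iff_mem, ← Polynomial.coeff_map, Polynomial.map_prod]
  exact Polynomial.X_pow_dvd_iff.mp hdvd l hl

theorem IsWeaklyRegularFamily.coeff_update_divX [DecidableEq ι] {N : ℕ} {p : ι → Polynomial A}
    (h : IsWeaklyRegularFamily M fun v : ι × Fin (N + 1) => (p v.1).coeff v.2) (i₀ : ι) :
    IsWeaklyRegularFamily (QuotSMulTop ((p i₀).coeff 0) M) fun v : ι × Fin N =>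
      (Function.update p i₀ (p i₀).divX v.1).coeff v.2 := by
  let e : ι × Fin N → ι × Fin (N + 1) := fun v =>
    (v.1, if v.1 = i₀ then v.2.succ else v.2.castSucc)
  have he : Function.Injective e := by
    rintro ⟨i, j⟩ ⟨i', j'⟩ hij
    simp only [e, Prod.mk.injEq] at hij
    obtain ⟨rfl, hj⟩ := hij
    split_ifs at hj
    · rw [Fin.succ_injective N hj]
    · rw [Fin.castSucc_injective N hj]
  have hrange : (i₀, (0 : Fin (N + 1))) ∉ Set.range e := by
    rintro ⟨⟨i, j⟩, hij⟩
    simp only [e, Prod.mk.injEq] at hij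
    obtain ⟨rfl, hj⟩ := hij
    rw [if_pos rfl] at hj
    exact Fin.succ_ne_zero j hj
  have hcoeff : (fun v : ι × Fin N => (Function.update p i₀ (p i₀).divX v.1).coeff v.2) =
      (fun v => (p v.1).coeff v.2) ∘ e := by
    ext ⟨i, j⟩
    obtain rfl | hi := eq_or_ne i i₀
    · simp [e, Polynomial.coeff_divX]
    · simp [e, hi]
  have hcoeff₀ : (p i₀).coeff 0 = (fun v : ι × Fin (N + 1) => (p v.1).coeff v.2) (i₀, 0) := rfl
  rw [hcoeff, hcoeff₀]
  exact h.quotSMulTop_comp he hrange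

variable [Fintype ι]

theorem coeff_zero_dvd_coeff_succ_prod_sub [DecidableEq ι] (p : ι → Polynomial A) (i₀ : ι)
    (l : ℕ) : (p i₀).coeff 0 ∣
      (∏ i, p i).coeff (l + 1) - (∏ i, Function.update p i₀ (p i₀).divX i).coeff l := by
  set q := ∏ i ∈ Finset.univ \ {i₀}, p i with hq
  have hp : ∏ i, p i = Polynomial.X * ((p i₀).divX * q) + Polynomial.C ((p i₀).coeff 0) * q := by
    rw [← mul_assoc, ← add_mul, Polynomial.X_mul_divX_add, hq,
      Finset.prod_eq_mul_prod_sdiff_singleton_of_mem (Finset.mem_univ i₀)]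
  rw [Finset.prod_update_of_mem (Finset.mem_univ i₀), ← hq, hp, Polynomial.coeff_add,
    Polynomial.coeff_X_mul, Polynomial.coeff_C_mul, add_sub_cancel_left]
  exact dvd_mul_right _ _

theorem isWeaklyRegular_coeff_prod {N : ℕ} {p : ι → Polynomial A}
    (h : IsWeaklyRegularFamily M fun v : ι × Fin N => (p v.1).coeff v.2) :
    IsWeaklyRegular M ((List.range N).map (∏ i, p i).coeff) := by
  classical
  induction N generalizing M p with
  | zero => exact .nil A M
  | succ N ih =>
    rw [List.range_succ_eq_map, List.map_cons, List.map_map, Polynomial.coeff_zero_prod]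
    refine isWeaklyRegular_prod_cons _ fun i₀ _ => .cons (h.isSMulRegular (i₀, 0)) ?_
    exact (isWeaklyRegular_quotSMulTop_map_congr (coeff_zero_dvd_coeff_succ_prod_sub p i₀)).mpr
      (ih (h.coeff_update_divX i₀))

end PolynomialCoeff

section Localization

variable {R : Type*} [CommRing R] (S : Type*) [CommRing S] [Algebra R S] {Q : Ideal R} [Q.IsPrime]
  [IsLocalization.AtPrime S Q]

theorem mk_algebraMap_mem_nonZeroDivisors [IsNoetherianRing R] {x : R} {rs : List R}
    (hreg : IsWeaklyRegular R (x :: rs)) (hmem : ∀ a ∈ x :: rs, a ∈ Q) :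
    Ideal.Quotient.mk ((Ideal.ofList rs).map (algebraMap R S)) (algebraMap R S x) ∈
      nonZeroDivisors (S ⧸ (Ideal.ofList rs).map (algebraMap R S)) := by
  have : IsLocalRing S := IsLocalization.AtPrime.isLocalRing S Q
  have : IsNoetherianRing S := IsLocalization.isNoetherianRing Q.primeCompl S inferInstance
  have hmax : ∀ a ∈ (x :: rs).map (algebraMap R S), a ∈ IsLocalRing.maximalIdeal S :=
    List.forall_mem_map.mpr fun a ha =>
      (IsLocalization.AtPrime.to_map_mem_maximal_iff S Q a).mpr (hmem a ha)
  have hperm := IsLocalRing.isWeaklyRegular_of_perm_of_subset_maximalIdeal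
    (hreg.of_isLocalization S Q.primeCompl) (List.perm_append_singleton _ _).symm hmax
  rw [isWeaklyRegular_append_iff, isWeaklyRegular_singleton_iff, ← Ideal.map_ofList,
    Ideal.smul_eq_mul, Ideal.mul_top] at hperm
  refine mem_nonZeroDivisors_iff_left.mpr fun y hy => hperm.2.right_eq_zero_of_smul ?_
  rwa [Algebra.smul_def]

theorem not_isUnit_mk_algebraMap {I : Ideal R} (hI : I ≤ Q) {x : R} (hx : x ∈ Q) :
    ¬ IsUnit (Ideal.Quotient.mk (I.map (algebraMap R S)) (algebraMap R S x)) := by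
  have : IsLocalRing S := IsLocalization.AtPrime.isLocalRing S Q
  have hmap : I.map (algebraMap R S) ≤ IsLocalRing.maximalIdeal S := by
    rw [← IsLocalization.AtPrime.map_eq_maximalIdeal Q S]
    exact Ideal.map_mono hI
  intro hunit
  have hzero : Ideal.Quotient.factor hmap (Ideal.Quotient.mk _ (algebraMap R S x)) = 0 := by
    rw [Ideal.Quotient.factor_mk, Ideal.Quotient.eq_zero_iff_mem]
    exact (IsLocalization.AtPrime.to_map_mem_maximal_iff S Q x).mpr hx
  exact not_isUnit_zero (hzero ▸ hunit.map (Ideal.Quotient.factor hmap))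

end Localization

section Jet

variable (k : Type*) [Field k] (m n r : ℕ) (hrn : r ≤ n)

theorem isWeaklyRegular_jetGen :
    IsWeaklyRegular (JetRing k m n) ((List.range (m + 1)).map (jetGen k m n r hrn)) := by
  refine isWeaklyRegular_coeff_prod (ι := Fin r) ?_
  simp only [coeff_sum_C_mul_X_pow]
  exact isWeaklyRegularFamily_X.comp_injective
    ((Fin.castLE_injective hrn).prodMap Function.injective_id)

theorem jetIdeal_le_compPrime {t : Fin r → ℕ} (ht : m < ∑ i, t i) :
    jetIdeal k m n r hrn ≤ compPrime k m n r hrn t := by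
  refine Ideal.span_le.mpr (Set.image_subset_iff.mpr fun l hl => ?_)
  refine coeff_prod_mem_of_lt_sum _ (fun i _ j hj => ?_) (lt_of_le_of_lt hl ht)
  rw [Polynomial.finsetSum_coeff]
  refine sum_mem fun a _ => ?_
  rw [Polynomial.coeff_C_mul_X_pow]
  split_ifs with hja
  · exact Ideal.subset_span ⟨i, a, hja ▸ hj, rfl⟩
  · exact zero_mem _

end Jet

theorem g0_nonZeroDivisor_and_variables_nonunit_general (k : Type*) [Field k] (m n r : ℕ)
    (hrn : r ≤ n) (S : Type*) [CommRing S] [Algebra (JetRing k m n) S]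
    (Q : Ideal (JetRing k m n)) [Q.IsPrime] [IsLocalization.AtPrime S Q]
    (hQ : jetIdeal k m n r hrn ≤ Q) :
    Ideal.Quotient.mk
        ((Ideal.span (jetGen k m n r hrn '' Set.Icc 1 m)).map (algebraMap (JetRing k m n) S))
        (algebraMap (JetRing k m n) S (jetGen k m n r hrn 0)) ∈
      nonZeroDivisors (S ⧸
        (Ideal.span (jetGen k m n r hrn '' Set.Icc 1 m)).map (algebraMap (JetRing k m n) S)) ∧
    ∀ f ∈ Q, ¬ IsUnit (Ideal.Quotient.mk
        ((Ideal.span (jetGen k m n r hrn '' Set.Icc 1 m)).map (algebraMap (JetRing k m n) S))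
        (algebraMap (JetRing k m n) S f)) := by
  have hspan : Ideal.span (jetGen k m n r hrn '' Set.Icc 1 m) =
      Ideal.ofList ((List.range' 1 m).map (jetGen k m n r hrn)) := by
    refine congrArg Ideal.span (Set.ext fun f => ?_)
    simp [Nat.lt_one_add_iff]
  have hreg := isWeaklyRegular_jetGen k m n r hrn
  rw [List.range_eq_range', List.range'_succ, List.map_cons] at hreg
  have hmem : ∀ f ∈ (List.range' 0 (m + 1)).map (jetGen k m n r hrn), f ∈ Q :=
    List.forall_mem_map.mpr fun l hl => hQ <| Ideal.subset_span <|
      Set.mem_image_of_mem _ (by simpa [Nat.lt_succ_iff] using hl)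
  have htail : Ideal.ofList ((List.range' 1 m).map (jetGen k m n r hrn)) ≤ Q :=
    Ideal.span_le.mpr fun f hf => hmem f (List.mem_cons_of_mem _ hf)
  rw [hspan]
  exact ⟨mk_algebraMap_mem_nonZeroDivisors S hreg hmem,
    fun f hf => not_isUnit_mk_algebraMap S htail hf⟩

set_option synthInstance.maxHeartbeats 1000000 in
set_option maxHeartbeats 1000000 in
/-- Let `t_1, …, t_r` be nonnegative integers with `t_1 + ⋯ + t_r = m + 1`, let
`P = P(m; t_1, …, t_r)` and `S = R_P/(g_1, …, g_m)R_P`.  Then the image of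
`g_0 = x_1^(0) ⋯ x_r^(0)` is a nonzerodivisor on `S`, and for each `i` with `t_i ≥ 1`
the image of `x_i^(0)` in `S` is a nonunit. -/
theorem g0_nonZeroDivisor_and_variables_nonunit
    (k : Type*) [Field k]
    (m n r : ℕ) (hr : 1 ≤ r) (hrn : r ≤ n)
    (t : Fin r → ℕ) (hsum : ∑ i, t i = m + 1)
    [hP : (compPrime k m n r hrn t).IsPrime] :
    (Ideal.Quotient.mk
        (Ideal.map
          (algebraMap (JetRing k m n) (Localization (compPrime k m n r hrn t).primeCompl))
          (Ideal.span (jetGen k m n r hrn '' Set.Icc 1 m)))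
        (algebraMap (JetRing k m n) (Localization (compPrime k m n r hrn t).primeCompl)
          (jetGen k m n r hrn 0)) ∈
      nonZeroDivisors
        (Localization (compPrime k m n r hrn t).primeCompl ⧸
          Ideal.map
            (algebraMap (JetRing k m n) (Localization (compPrime k m n r hrn t).primeCompl))
            (Ideal.span (jetGen k m n r hrn '' Set.Icc 1 m)))) ∧
    ∀ i : Fin r, 1 ≤ t i →
      ¬ IsUnit
        (Ideal.Quotient.mk
          (Ideal.map
            (algebraMap (JetRing k m n) (Localization (compPrime k m n r hrn t).primeCompl))
            (Ideal.span (jetGen k m n r hrn '' Set.Icc 1 m)))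
          (algebraMap (JetRing k m n) (Localization (compPrime k m n r hrn t).primeCompl)
            (MvPolynomial.X (Fin.castLE hrn i, (0 : Fin (m + 1)))))) := by
  obtain ⟨hg₀, hunit⟩ := g0_nonZeroDivisor_and_variables_nonunit_general k m n r hrn
    (Localization (compPrime k m n r hrn t).primeCompl) (compPrime k m n r hrn t)
    (jetIdeal_le_compPrime k m n r hrn (hsum ▸ m.lt_succ_self))
  exact ⟨hg₀, fun i hi => hunit _ (Ideal.subset_span ⟨i, 0, hi, rfl⟩)⟩
end
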